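/- In the construction described in the context (pseudo-random k-uniform hypergraph H satisfying R_a–R_f, with k = ℓ, i.e. packing perfect matchings), with high probability over the random choices of the partitions (X_i,Y_i), the permutations σ_i, τ_i, and the random labelling of edges, every one of the bipartite graphs G_i (i = 1,…,r) has minimum degree at least (1−2ε)·ν_k·p₀, and every two distinct vertices lying in the same part of G_i have at most (1+5ε)·ν_k·p₀² common neighbours. -/

import Mathlib

open Finset Filter MeasureTheory
open scoped ENNReal

/-- The set of elements of `Fin n` occupying positions `lo, …, lo+size-1` under the
ordering induced by the permutation `π`. -/
def blockAt {n : ℕ} (π : Equiv.Perm (Fin n)) (lo size : ℕ) : Finset (Fin n) :=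
  Finset.univ.filter fun v => lo ≤ (π.symm v).val ∧ (π.symm v).val < lo + size

/-- Using a uniformly random permutation `ρ` of `Fin r`, pick a uniformly random element
of the set `I` (the element of `I` whose `ρ`-preimage is smallest); `none` if `I = ∅`. -/
def pickUniform {r : ℕ} (ρ : Equiv.Perm (Fin r)) (I : Finset (Fin r)) : Option (Fin r) :=
  if h : (I.image ρ.symm).Nonempty then some (ρ ((I.image ρ.symm).min' h)) else none

/-- The set `X_a ∪ Y_b` determined by the permutation `π` of `Fin n` (`n = k ν`,
`k_X = ⌊k/2⌋`, `k_Y = ⌈k/2⌉`): `X` consists of the first `k_X ν` positions, split into `ν`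
consecutive blocks `X_a` of size `k_X`, and `Y` of the remaining `k_Y ν` positions, split
into `ν` consecutive blocks `Y_b` of size `k_Y`. -/
def pairOf (n k ν : ℕ) (π : Equiv.Perm (Fin n)) (a b : Fin ν) : Finset (Fin n) :=
  blockAt π ((a : ℕ) * (k / 2)) (k / 2)
    ∪ blockAt π ((k / 2) * ν + (b : ℕ) * (k - k / 2)) (k - k / 2)

/-- The partition/permutation `π` includes the set `E`. -/
def includesPairXY (n k ν : ℕ) (π : Equiv.Perm (Fin n)) (E : Finset (Fin n)) : Prop :=
  ∃ a b : Fin ν, E = pairOf n k ν π a b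

open scoped Classical in
/-- The random label of `E`: a uniformly random index `i` among those that include `E`
(chosen via the auxiliary uniform permutation `ρs E` of `Fin r`), `none` if none do. -/
noncomputable def labelP (n k ν r : ℕ) (πs : Fin r → Equiv.Perm (Fin n))
    (ρs : Finset (Fin n) → Equiv.Perm (Fin r)) (E : Finset (Fin n)) : Option (Fin r) :=
  pickUniform (ρs E) (Finset.univ.filter fun i => includesPairXY n k ν (πs i) E)

/-- `(a, b)` is an edge of the bipartite graph `G_i`: the set `X_{i,a} ∪ Y_{i,b}` is an
edge of `H` and it is labelled `i`. -/
noncomputable def edgeP (n k ν r : ℕ) (H : Finset (Finset (Fin n)))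
    (ω : (Fin r → Equiv.Perm (Fin n)) × (Finset (Fin n) → Equiv.Perm (Fin r)))
    (i : Fin r) (a b : Fin ν) : Prop :=
  pairOf n k ν (ω.1 i) a b ∈ H ∧
    labelP n k ν r ω.1 ω.2 (pairOf n k ν (ω.1 i) a b) = some i

instance instMeasPerm (α : Type*) : MeasurableSpace (Equiv.Perm α) := ⊤

/-- The uniform probability measure on a nonempty finite type. -/
noncomputable def uniformM (α : Type*) [Fintype α] [Nonempty α] [MeasurableSpace α] :
    Measure α :=
  (PMF.uniformOfFintype α).toMeasure

instance (α : Type*) [Fintype α] [Nonempty α] [MeasurableSpace α] :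
    IsProbabilityMeasure (uniformM α) := by
  unfold uniformM; infer_instance

/-- The probability measure of the construction: `r` independent uniform random
partitions-with-orderings `(X_i, Y_i, σ_i, τ_i)` (each encoded by a uniform permutation of
`Fin n`), together with independent uniform auxiliary permutations of `Fin r` (one per
potential edge) realizing the uniform random labelling. -/
noncomputable def constrMeasure2 (n r : ℕ) :
    Measure ((Fin r → Equiv.Perm (Fin n)) × (Finset (Fin n) → Equiv.Perm (Fin r))) :=
  (Measure.pi fun _ : Fin r => uniformM (Equiv.Perm (Fin n))).prod
    (Measure.pi fun _ : Finset (Fin n) => uniformM (Equiv.Perm (Fin r)))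

open scoped Classical in
/-- The neighbourhood `N_H(S)` of `S` in a `k`-uniform hypergraph `H` on `Fin n`. -/
def hNbhd (n k : ℕ) (H : Finset (Finset (Fin n))) (S : Finset (Fin n)) :
    Finset (Finset (Fin n)) :=
  Finset.univ.filter fun Y => Y.card = k - S.card ∧ S ∪ Y ∈ H

/-- The degree `d_H(S) = |N_H(S)|`. -/
def hDeg (n k : ℕ) (H : Finset (Finset (Fin n))) (S : Finset (Fin n)) : ℕ :=
  (hNbhd n k H S).card

/-!
For a fixed `k_X`-set `S`, the number of blocks `Y_b` falling in `N_H(S)` is a function of a random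
permutation that changes by at most 2 under a transposition, hence concentrates around its mean,
which pseudorandomness controls. A union bound over all `S` (and over all disjoint pairs, for
codegrees) covers whichever sets occur as `X_a`, and likewise with the two sides exchanged. By
Chernoff's inequality each `k`-set is included in about `f₀` of the `r` independent partitions. For
such partitions, an edge of the `i`-th graph keeps the label `i` with probability about `1 / f₀`,
independently of the others, so Hoeffding's inequality turns degrees `≈ ν p` into `≈ ν p / f₀` and
codegrees `≈ ν p²` into `≈ ν p² / f₀²`.
-/

open ProbabilityTheory
open scoped BigOperators NNReal

/-! ### Concentration for random permutations -/

section UniformMeasure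

variable {α β : Type*} [Fintype α] [Nonempty α] [MeasurableSpace α] [DiscreteMeasurableSpace α]

instance instDiscreteMeasurableSpacePerm (α : Type*) : DiscreteMeasurableSpace (Equiv.Perm α) :=
  ⟨fun _ => trivial⟩

theorem integral_uniformM (f : α → ℝ) : ∫ x, f x ∂uniformM α = 𝔼 x, f x := by
  rw [uniformM, PMF.integral_eq_sum, Fintype.expect_eq_sum_div_card, div_eq_inv_mul, mul_sum]
  simp

theorem uniformM_real_eq_expect (P : α → Prop) [DecidablePred P] :
    (uniformM α).real {x | P x} = 𝔼 x, if P x then (1 : ℝ) else 0 := by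
  rw [← integral_uniformM, ← integral_indicator_one (MeasurableSet.of_discrete (s := {x | P x}))]
  exact integral_congr_ae (.of_forall fun _ => by simp [Set.indicator_apply])

theorem uniformM_real_eq_of_equiv {P Q : α → Prop} (e : α ≃ α) (h : ∀ x, P x ↔ Q (e x)) :
    (uniformM α).real {x | P x} = (uniformM α).real {x | Q x} := by
  classical
  rw [uniformM_real_eq_expect, uniformM_real_eq_expect]
  exact Fintype.expect_equiv e _ _ fun x => by simp only [h]

/- Averaging the indicators of the fibres over `S` gives `1`, and all of them have the same
probability by symmetry. -/
theorem uniformM_real_eq_inv_card_of_homogeneous {f : α → β} {S : Finset β} (hf : ∀ x, f x ∈ S)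
    (hS : ∀ y ∈ S, ∀ z ∈ S, ∃ e : α ≃ α, ∀ x, f x = y ↔ f (e x) = z) {y : β} (hy : y ∈ S) :
    (uniformM α).real {x | f x = y} = (#S : ℝ)⁻¹ := by
  classical
  have hsum : ∑ z ∈ S, (uniformM α).real {x | f x = z} = 1 := by
    simp only [uniformM_real_eq_expect, ← expect_sum_comm, sum_ite_eq, hf, if_true,
      Fintype.expect_const]
  have heq : ∀ z ∈ S, (uniformM α).real {x | f x = z} = (uniformM α).real {x | f x = y} :=
    fun z hz => by
      obtain ⟨e, he⟩ := hS z hz y hy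
      exact uniformM_real_eq_of_equiv e he
  rw [sum_congr rfl heq, sum_const, nsmul_eq_mul] at hsum
  exact eq_inv_of_mul_eq_one_right hsum

theorem hasSubgaussianMGF_sub_expect_iff {g : α → ℝ} {v : ℝ≥0} :
    HasSubgaussianMGF (fun x => g x - 𝔼 y, g y) v (uniformM α) ↔
      ∀ t, 𝔼 x, Real.exp (t * (g x - 𝔼 y, g y)) ≤ Real.exp (v * t ^ 2 / 2) := by
  simp_rw [← integral_uniformM (fun _ => Real.exp _)]
  exact ⟨fun h t => h.mgf_le t, fun h => ⟨fun _ => .of_finite, h⟩⟩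

end UniformMeasure

section Expectation

variable {α β : Type*} [Fintype α] [Nonempty α]

theorem abs_expect_sub_expect_le {f g : α → ℝ} {c : ℝ} (h : ∀ x, |f x - g x| ≤ c) :
    |𝔼 x, f x - 𝔼 x, g x| ≤ c := by
  rw [← expect_sub_distrib]
  exact (abs_expect_le _ _).trans (expect_le univ_nonempty fun x _ => h x)

theorem abs_sub_expect_le {f : α → ℝ} {c : ℝ} (h : ∀ x y, |f x - f y| ≤ c) (x : α) :
    |f x - 𝔼 y, f y| ≤ c := by
  simpa only [Fintype.expect_const] using
    abs_expect_sub_expect_le (f := fun _ => f x) (g := f) (h x)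

theorem expect_exp_sub_expect_le {f : α → ℝ} {c : ℝ} (h : ∀ x y, |f x - f y| ≤ c) (t : ℝ) :
    𝔼 x, Real.exp (t * (f x - 𝔼 y, f y)) ≤ Real.exp (c ^ 2 * t ^ 2 / 2) := by
  let _ : MeasurableSpace α := ⊤
  have : DiscreteMeasurableSpace α := ⟨fun _ => trivial⟩
  have hmem (x : α) : f x - 𝔼 y, f y ∈ Set.Icc (-c) c := abs_le.1 (abs_sub_expect_le h x)
  have hmean : ∫ x, (f x - 𝔼 y, f y) ∂uniformM α = 0 := by
    rw [integral_uniformM, expect_sub_distrib, Fintype.expect_const, sub_self]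
  have hsub := hasSubgaussianMGF_of_mem_Icc_of_integral_eq_zero
    (Measurable.of_discrete.aemeasurable) (.of_forall hmem) hmean
  refine (hasSubgaussianMGF_sub_expect_iff.1 hsub t).trans_eq ?_
  rw [sub_neg_eq_add, ← two_mul]
  simp

/- The centred `f` splits as the centred conditional mean plus the fluctuation within a fibre. -/
theorem expect_exp_sub_expect_prod_le [Fintype β] {f : α → β → ℝ} {c B t : ℝ}
    (hmean : ∀ x y, |𝔼 z, f x z - 𝔼 z, f y z| ≤ c)
    (hfibre : ∀ x, 𝔼 z, Real.exp (t * (f x z - 𝔼 z', f x z')) ≤ B) :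
    𝔼 x, 𝔼 z, Real.exp (t * (f x z - 𝔼 y, 𝔼 z', f y z')) ≤ Real.exp (c ^ 2 * t ^ 2 / 2) * B := by
  set m : α → ℝ := fun x => 𝔼 z, f x z
  have hsplit (x : α) : 𝔼 z, Real.exp (t * (f x z - 𝔼 y, m y)) =
      Real.exp (t * (m x - 𝔼 y, m y)) * 𝔼 z, Real.exp (t * (f x z - m x)) := by
    simp_rw [mul_expect, ← Real.exp_add]
    exact expect_congr rfl fun z _ => by ring_nf
  have hB : 0 ≤ B := (expect_nonneg fun _ _ => (Real.exp_pos _).le).trans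
    (hfibre (Classical.arbitrary α))
  calc 𝔼 x, 𝔼 z, Real.exp (t * (f x z - 𝔼 y, m y))
      ≤ 𝔼 x, Real.exp (t * (m x - 𝔼 y, m y)) * B :=
        expect_le_expect fun x _ => by
          rw [hsplit]
          exact mul_le_mul_of_nonneg_left (hfibre x) (Real.exp_pos _).le
    _ = (𝔼 x, Real.exp (t * (m x - 𝔼 y, m y))) * B := (expect_mul _ _ _).symm
    _ ≤ Real.exp (c ^ 2 * t ^ 2 / 2) * B :=
        mul_le_mul_of_nonneg_right (expect_exp_sub_expect_le hmean t) hB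

end Expectation

section PermConcentration

open Equiv.Perm (decomposeFin)

variable {n : ℕ}

theorem decomposeFin_symm_zero_swap (x y : Fin n) :
    decomposeFin.symm (0, Equiv.swap x y) = Equiv.swap x.succ y.succ := by
  ext z
  refine Fin.cases ?_ (fun z => ?_) z
  · rw [Equiv.Perm.decomposeFin_symm_apply_zero,
      Equiv.swap_apply_of_ne_of_ne (Fin.succ_ne_zero x).symm (Fin.succ_ne_zero y).symm]
  · simp only [Equiv.Perm.decomposeFin_symm_apply_succ, Equiv.swap_self, Equiv.refl_apply,
      Equiv.swap_apply_def, Fin.succ_inj]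
    split_ifs <;> rfl

theorem decomposeFin_symm_mul_swap (x : Fin (n + 1)) (e : Equiv.Perm (Fin n)) (a b : Fin n) :
    decomposeFin.symm (x, e * Equiv.swap a b) =
      decomposeFin.symm (x, e) * Equiv.swap a.succ b.succ := by
  rw [← decomposeFin_symm_zero_swap]
  ext z
  refine Fin.cases ?_ (fun z => ?_) z <;> simp

theorem exists_decomposeFin_symm_eq_mul_swap (x : Fin (n + 1)) (e : Equiv.Perm (Fin n)) :
    ∃ y z, decomposeFin.symm (x, e) = decomposeFin.symm (0, e) * Equiv.swap y z := by
  refine ⟨(decomposeFin.symm (0, e))⁻¹ 0, (decomposeFin.symm (0, e))⁻¹ x, ?_⟩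
  rw [Equiv.mul_swap_eq_swap_mul]
  ext z
  refine Fin.cases ?_ (fun z => ?_) z <;> simp

theorem expect_perm_succ (F : Equiv.Perm (Fin (n + 1)) → ℝ) :
    𝔼 π, F π = 𝔼 x, 𝔼 e, F (decomposeFin.symm (x, e)) := by
  rw [← Fintype.expect_equiv decomposeFin.symm _ F fun _ => rfl, ← univ_product_univ,
    expect_product]

/-- `g` changes by at most `c` when its argument is multiplied by a transposition. -/
def IsSwapLipschitz (c : ℝ) (g : Equiv.Perm (Fin n) → ℝ) : Prop :=
  ∀ π x y, |g (π * Equiv.swap x y) - g π| ≤ c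

namespace IsSwapLipschitz

variable {c : ℝ}

theorem comp_decomposeFin_symm {g : Equiv.Perm (Fin (n + 1)) → ℝ} (hg : IsSwapLipschitz c g)
    (x : Fin (n + 1)) : IsSwapLipschitz c fun e => g (decomposeFin.symm (x, e)) := fun e a b => by
  simpa only [decomposeFin_symm_mul_swap] using hg _ a.succ b.succ

theorem abs_sub_decomposeFin_symm_le {g : Equiv.Perm (Fin (n + 1)) → ℝ} (hg : IsSwapLipschitz c g)
    (x y : Fin (n + 1)) (e : Equiv.Perm (Fin n)) :
    |g (decomposeFin.symm (x, e)) - g (decomposeFin.symm (y, e))| ≤ 2 * c := by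
  have hzero (z : Fin (n + 1)) :
      |g (decomposeFin.symm (z, e)) - g (decomposeFin.symm (0, e))| ≤ c := by
    obtain ⟨a, b, h⟩ := exists_decomposeFin_symm_eq_mul_swap z e
    exact h ▸ hg _ _ _
  calc |g (decomposeFin.symm (x, e)) - g (decomposeFin.symm (y, e))|
      ≤ |g (decomposeFin.symm (x, e)) - g (decomposeFin.symm (0, e))| +
        |g (decomposeFin.symm (0, e)) - g (decomposeFin.symm (y, e))| := abs_sub_le _ _ _
    _ ≤ 2 * c := by
      rw [abs_sub_comm (g (decomposeFin.symm (0, e)))]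
      linarith [hzero x, hzero y]

/- Reveal the image of `0` first: moving it costs two transpositions. -/
theorem expect_exp_le : ∀ {n : ℕ} {g : Equiv.Perm (Fin n) → ℝ}, IsSwapLipschitz c g → ∀ t,
    𝔼 π, Real.exp (t * (g π - 𝔼 σ, g σ)) ≤ Real.exp (n * (2 * c) ^ 2 * t ^ 2 / 2)
  | 0, g, _, t => by simp
  | n + 1, g, hg, t => by
    rw [expect_perm_succ, expect_perm_succ g]
    refine (expect_exp_sub_expect_prod_le
      (fun x y => abs_expect_sub_expect_le (hg.abs_sub_decomposeFin_symm_le x y))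
      (fun x => (hg.comp_decomposeFin_symm x).expect_exp_le t)).trans_eq ?_
    rw [← Real.exp_add]
    push_cast
    ring_nf

theorem hasSubgaussianMGF {c : ℝ≥0} {g : Equiv.Perm (Fin n) → ℝ} (hg : IsSwapLipschitz c g) :
    HasSubgaussianMGF (fun π => g π - 𝔼 σ, g σ) (n * (2 * c) ^ 2)
      (uniformM (Equiv.Perm (Fin n))) :=
  hasSubgaussianMGF_sub_expect_iff.2 fun t => by simpa using hg.expect_exp_le t

theorem measureReal_expect_add_le_le {c : ℝ≥0} {g : Equiv.Perm (Fin n) → ℝ}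
    (hg : IsSwapLipschitz c g) {t : ℝ} (ht : 0 ≤ t) :
    (uniformM (Equiv.Perm (Fin n))).real {π | 𝔼 σ, g σ + t ≤ g π} ≤
      Real.exp (-t ^ 2 / (8 * n * c ^ 2)) := by
  convert hg.hasSubgaussianMGF.measure_ge_le ht using 3
  · simp only [le_sub_iff_add_le']
  · push_cast; ring

theorem neg {g : Equiv.Perm (Fin n) → ℝ} (hg : IsSwapLipschitz c g) :
    IsSwapLipschitz c (-g) := fun π x y => by
  simpa [abs_sub_comm, neg_add_eq_sub] using hg π x y

theorem measureReal_le_expect_sub_le {c : ℝ≥0} {g : Equiv.Perm (Fin n) → ℝ}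
    (hg : IsSwapLipschitz c g) {t : ℝ} (ht : 0 ≤ t) :
    (uniformM (Equiv.Perm (Fin n))).real {π | g π ≤ 𝔼 σ, g σ - t} ≤
      Real.exp (-t ^ 2 / (8 * n * c ^ 2)) := by
  refine (measureReal_mono fun π hπ => ?_).trans (hg.neg.measureReal_expect_add_le_le ht)
  simp only [Pi.neg_apply, expect_neg_distrib, Set.mem_ofPred_eq] at hπ ⊢
  linarith

end IsSwapLipschitz

end PermConcentration

/-! ### Random blocks -/

section PermImages

variable {n s : ℕ}

theorem map_mul_toEmbedding {α : Type*} (σ π : Equiv.Perm α) (T : Finset α) :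
    T.map (σ * π).toEmbedding = (T.map π.toEmbedding).map σ.toEmbedding := by
  rw [Finset.map_map]
  rfl

theorem exists_perm_map_eq {E E' : Finset (Fin n)} (h : #E = #E') :
    ∃ σ : Equiv.Perm (Fin n), E.map σ.toEmbedding = E' := by
  refine ⟨(equivOfCardEq h).extendSubtype, eq_of_subset_of_card_le ?_ (by rw [card_map, h])⟩
  exact map_subset_iff_subset_preimage.2 fun y hy =>
    mem_preimage.2 ((equivOfCardEq h).extendSubtype_mem y hy)

theorem uniformM_real_map_eq {T E : Finset (Fin n)} (hT : #T = s) (hE : #E = s) :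
    (uniformM (Equiv.Perm (Fin n))).real {π | T.map π.toEmbedding = E} = (n.choose s : ℝ)⁻¹ := by
  rw [uniformM_real_eq_inv_card_of_homogeneous (S := powersetCard s univ) (fun π => by simp [hT])
    (fun E hE E' hE' => ?_) (by simp [hE]), card_powersetCard, card_univ, Fintype.card_fin]
  obtain ⟨σ, rfl⟩ := exists_perm_map_eq (E := E) (E' := E') (by simp_all)
  refine ⟨Equiv.mulLeft σ, fun π => ?_⟩
  rw [Equiv.coe_mulLeft, map_mul_toEmbedding, Finset.map_inj]

theorem uniformM_real_map_mem {T : Finset (Fin n)} {F : Finset (Finset (Fin n))} (hT : #T = s)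
    (hF : ∀ E ∈ F, #E = s) :
    (uniformM (Equiv.Perm (Fin n))).real {π | T.map π.toEmbedding ∈ F} = #F / n.choose s := by
  have hunion : {π : Equiv.Perm (Fin n) | T.map π.toEmbedding ∈ F} =
      ⋃ E ∈ F, {π | T.map π.toEmbedding = E} := by ext; simp
  rw [hunion, measureReal_biUnion_finset (fun E _ E' _ hne => ?_) fun _ _ => .of_discrete,
    sum_congr rfl fun E hE => uniformM_real_map_eq hT (hF E hE), sum_const, nsmul_eq_mul,
    div_eq_mul_inv]
  exact Set.disjoint_left.2 fun π h h' => hne (h.symm.trans h')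

theorem uniformM_real_exists_map_eq {ι : Type*} [Fintype ι] {T : ι → Finset (Fin n)}
    (hinj : T.Injective) (hT : ∀ i, #(T i) = s) {E : Finset (Fin n)} (hE : #E = s) :
    (uniformM (Equiv.Perm (Fin n))).real {π | ∃ i, (T i).map π.toEmbedding = E} =
      Fintype.card ι / n.choose s := by
  have hunion : {π : Equiv.Perm (Fin n) | ∃ i, (T i).map π.toEmbedding = E} =
      ⋃ i ∈ univ, {π | (T i).map π.toEmbedding = E} := by ext; simp
  rw [hunion, measureReal_biUnion_finset (fun i _ j _ hne => ?_) fun _ _ => .of_discrete,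
    sum_congr rfl fun i _ => uniformM_real_map_eq (hT i) hE, sum_const, nsmul_eq_mul,
    div_eq_mul_inv, card_univ]
  exact Set.disjoint_left.2 fun π h h' => hne (hinj (map_injective _ (h.trans h'.symm)))

end PermImages

section BlockCount

variable {n s : ℕ} {ι : Type*} [Fintype ι]

/-- The number of blocks `T b` that the permutation `π` carries onto a member of the family `F`. -/
def blockCount (T : ι → Finset (Fin n)) (F : Finset (Finset (Fin n))) (π : Equiv.Perm (Fin n)) :
    ℕ :=
  #{b | (T b).map π.toEmbedding ∈ F}

variable {T : ι → Finset (Fin n)} {F : Finset (Finset (Fin n))}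

theorem expect_blockCount (hT : ∀ b, #(T b) = s) (hF : ∀ E ∈ F, #E = s) :
    𝔼 π, (blockCount T F π : ℝ) = Fintype.card ι * (#F / n.choose s) := by
  simp only [blockCount, card_filter, Nat.cast_sum, Nat.cast_ite, Nat.cast_one, Nat.cast_zero]
  simp only [expect_sum_comm, ← uniformM_real_eq_expect, uniformM_real_map_mem (hT _) hF,
    sum_const, card_univ, nsmul_eq_mul]

theorem card_filter_mem_le_one (hT : Pairwise (Function.onFun Disjoint T)) (x : Fin n) :
    #{b | x ∈ T b} ≤ 1 :=
  card_le_one.2 fun _ hb _ hb' => by_contra fun hne =>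
    disjoint_left.1 (hT hne) (mem_filter.1 hb).2 (mem_filter.1 hb').2

theorem blockCount_mul_swap_le (hT : Pairwise (Function.onFun Disjoint T)) (π : Equiv.Perm (Fin n))
    (x y : Fin n) : blockCount T F (π * Equiv.swap x y) ≤ blockCount T F π + 2 := by
  have hfix {b : ι} (hx : x ∉ T b) (hy : y ∉ T b) :
      (T b).map (π * Equiv.swap x y).toEmbedding = (T b).map π.toEmbedding := by
    simp only [map_eq_image]
    exact image_congr fun z hz => congrArg π (Equiv.swap_apply_of_ne_of_ne
      (ne_of_mem_of_not_mem hz hx) (ne_of_mem_of_not_mem hz hy))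
  classical
  have hsub : univ.filter (fun b => (T b).map (π * Equiv.swap x y).toEmbedding ∈ F) ⊆
      univ.filter (fun b => (T b).map π.toEmbedding ∈ F) ∪
        (univ.filter (fun b => x ∈ T b) ∪ univ.filter fun b => y ∈ T b) := fun b => by
    by_cases hx : x ∈ T b <;> by_cases hy : y ∈ T b <;> simp [hx, hy, hfix]
  calc blockCount T F (π * Equiv.swap x y)
      ≤ blockCount T F π + (#{b | x ∈ T b} + #{b | y ∈ T b}) :=
        (card_le_card hsub).trans ((card_union_le _ _).trans
          (Nat.add_le_add_left (card_union_le _ _) _))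
    _ ≤ blockCount T F π + 2 := by
        linarith [card_filter_mem_le_one hT x, card_filter_mem_le_one hT y]

theorem isSwapLipschitz_blockCount (hT : Pairwise (Function.onFun Disjoint T)) :
    IsSwapLipschitz (2 : ℝ≥0) fun π => (blockCount T F π : ℝ) := fun π x y => by
  have hle := blockCount_mul_swap_le (F := F) hT π x y
  have hge := blockCount_mul_swap_le (F := F) hT (π * Equiv.swap x y) x y
  rw [mul_assoc, Equiv.swap_mul_self, mul_one] at hge
  simp only [NNReal.coe_ofNat, abs_sub_le_iff, sub_le_iff_le_add']
  exact_mod_cast And.intro hle hge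

theorem measureReal_not_blockCount_le_le (hdisj : Pairwise (Function.onFun Disjoint T))
    (hT : ∀ b, #(T b) = s) (hF : ∀ E ∈ F, #E = s) {c t : ℝ} (ht : 0 ≤ t)
    (hc : Fintype.card ι * (#F / n.choose s : ℝ) ≤ c - t) :
    (uniformM (Equiv.Perm (Fin n))).real {π | ¬(blockCount T F π : ℝ) ≤ c} ≤
      Real.exp (-t ^ 2 / (32 * n)) := by
  rw [← expect_blockCount hT hF] at hc
  refine (measureReal_mono fun π hπ => ?_).trans
    (((isSwapLipschitz_blockCount hdisj).measureReal_expect_add_le_le ht).trans_eq ?_)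
  · exact (le_sub_iff_add_le.1 hc).trans (not_le.1 hπ).le
  · rw [NNReal.coe_ofNat]
    ring_nf

theorem measureReal_not_le_blockCount_le (hdisj : Pairwise (Function.onFun Disjoint T))
    (hT : ∀ b, #(T b) = s) (hF : ∀ E ∈ F, #E = s) {d t : ℝ} (ht : 0 ≤ t)
    (hd : d + t ≤ Fintype.card ι * (#F / n.choose s : ℝ)) :
    (uniformM (Equiv.Perm (Fin n))).real {π | ¬d ≤ (blockCount T F π : ℝ)} ≤
      Real.exp (-t ^ 2 / (32 * n)) := by
  rw [← expect_blockCount hT hF] at hd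
  refine (measureReal_mono fun π hπ => ?_).trans
    (((isSwapLipschitz_blockCount hdisj).measureReal_le_expect_sub_le ht).trans_eq ?_)
  · exact (not_le.1 hπ).le.trans (le_sub_iff_add_le.2 hd)
  · rw [NNReal.coe_ofNat]
    ring_nf

end BlockCount

section PickUniform

variable {r : ℕ}

theorem pickUniform_map (σ ρ : Equiv.Perm (Fin r)) (I : Finset (Fin r)) :
    pickUniform (σ * ρ) (I.map σ.toEmbedding) = (pickUniform ρ I).map σ := by
  have himage : (I.map σ.toEmbedding).image (σ * ρ).symm = I.image ρ.symm := by
    rw [map_eq_image, image_image]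
    exact image_congr fun x _ => by simp [Equiv.symm_apply_eq]
  simp only [pickUniform, himage]
  split_ifs <;> simp

theorem pickUniform_mem {ρ : Equiv.Perm (Fin r)} {I : Finset (Fin r)} (hI : I.Nonempty) :
    pickUniform ρ I ∈ I.map .some := by
  have hmem := min'_mem _ (hI.image ρ.symm)
  rw [pickUniform, dif_pos (hI.image _), Finset.mem_map]
  obtain ⟨i, hi, hi'⟩ := mem_image.1 hmem
  exact ⟨i, hi, by simp [← hi']⟩

theorem uniformM_real_pickUniform_eq_some {I : Finset (Fin r)} {i : Fin r} (hi : i ∈ I) :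
    (uniformM (Equiv.Perm (Fin r))).real {ρ | pickUniform ρ I = some i} = (#I : ℝ)⁻¹ := by
  rw [← card_map .some]
  refine uniformM_real_eq_inv_card_of_homogeneous (fun ρ => pickUniform_mem ⟨i, hi⟩)
    (fun u hu v hv => ?_) (mem_map_of_mem .some hi)
  obtain ⟨x, hx, rfl⟩ := Finset.mem_map.1 hu
  obtain ⟨y, hy, rfl⟩ := Finset.mem_map.1 hv
  refine ⟨Equiv.mulLeft (Equiv.swap x y), fun ρ => ?_⟩
  have hI : I.map (Equiv.swap x y).toEmbedding = I := map_perm fun z hz => by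
    by_contra hzI
    exact hz (Equiv.swap_apply_of_ne_of_ne (ne_of_mem_of_not_mem hx hzI).symm
      (ne_of_mem_of_not_mem hy hzI).symm)
  have hmul := pickUniform_map (Equiv.swap x y) ρ I
  rw [hI] at hmul
  have hy' : Function.Embedding.some y = (some x).map (Equiv.swap x y) := by simp
  rw [Equiv.coe_mulLeft, hmul, hy', (Option.map_injective (Equiv.swap x y).injective).eq_iff]
  rfl

end PickUniform

section Blocks

variable {n : ℕ} (π : Equiv.Perm (Fin n))

theorem blockAt_eq_map (lo s : ℕ) : blockAt π lo s = (blockAt 1 lo s).map π.toEmbedding := by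
  ext v
  simp only [blockAt, mem_map_equiv, mem_filter_univ]
  rfl

theorem card_blockAt {lo s : ℕ} (h : lo + s ≤ n) : #(blockAt π lo s) = s := by
  have himage : (blockAt 1 lo s : Finset (Fin n)).map Fin.valEmbedding = Ico lo (lo + s) := by
    ext x
    simp only [blockAt, Finset.mem_map, mem_filter_univ, mem_Ico]
    exact ⟨fun ⟨_, hv, hvx⟩ => hvx ▸ hv, fun hx => ⟨⟨x, by omega⟩, hx, rfl⟩⟩
  rw [blockAt_eq_map, card_map, ← card_map Fin.valEmbedding, himage, Nat.card_Ico,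
    Nat.add_sub_cancel_left]

theorem disjoint_blockAt {lo s lo' s' : ℕ} (h : lo + s ≤ lo') :
    Disjoint (blockAt π lo s) (blockAt π lo' s') :=
  disjoint_filter.2 fun _ _ hv hv' => by omega

theorem pairwise_disjoint_blockAt (lo s ν : ℕ) :
    Pairwise (Function.onFun Disjoint fun a : Fin ν => blockAt π (lo + a * s) s) := by
  have hlt (a b : Fin ν) (h : a < b) :
      Disjoint (blockAt π (lo + a * s) s) (blockAt π (lo + b * s) s) := by
    refine disjoint_blockAt π ?_
    rw [add_assoc, ← Nat.succ_mul]
    exact Nat.add_le_add_left (Nat.mul_le_mul_right s h) lo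
  intro a b hne
  exact hne.lt_or_gt.elim (hlt a b) fun h => (hlt b a h).symm

variable {k ν : ℕ}

/-- The positions that make up the block `X_a`, so that `X_a` itself is their image under the
permutation of the construction. -/
def xBlock (k ν : ℕ) (a : Fin ν) : Finset (Fin (k * ν)) :=
  blockAt 1 (a * (k / 2)) (k / 2)

/-- The positions that make up the block `Y_b`. -/
def yBlock (k ν : ℕ) (b : Fin ν) : Finset (Fin (k * ν)) :=
  blockAt 1 (k / 2 * ν + b * (k - k / 2)) (k - k / 2)

theorem pairOf_eq_union (π : Equiv.Perm (Fin (k * ν))) (a b : Fin ν) :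
    pairOf (k * ν) k ν π a b =
      (xBlock k ν a).map π.toEmbedding ∪ (yBlock k ν b).map π.toEmbedding := by
  rw [pairOf, blockAt_eq_map, blockAt_eq_map π (k / 2 * ν + _)]
  rfl

theorem mul_add_le_mul (a : Fin ν) (s : ℕ) : a * s + s ≤ s * ν := by
  rw [← Nat.succ_mul, mul_comm s]
  exact Nat.mul_le_mul_right s a.2

theorem half_mul_add_sub_half_mul (k ν : ℕ) : k / 2 * ν + (k - k / 2) * ν = k * ν := by
  rw [← add_mul, Nat.add_sub_cancel' (Nat.div_le_self k 2)]

theorem card_xBlock (a : Fin ν) : #(xBlock k ν a) = k / 2 :=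
  card_blockAt 1 ((mul_add_le_mul a _).trans (Nat.mul_le_mul_right ν (Nat.div_le_self k 2)))

theorem card_yBlock (b : Fin ν) : #(yBlock k ν b) = k - k / 2 := by
  refine card_blockAt 1 ?_
  rw [add_assoc, ← half_mul_add_sub_half_mul k]
  exact Nat.add_le_add_left (mul_add_le_mul b _) _

theorem pairwise_disjoint_xBlock : Pairwise (Function.onFun Disjoint (xBlock k ν)) := by
  have h := pairwise_disjoint_blockAt (1 : Equiv.Perm (Fin (k * ν))) 0 (k / 2) ν
  simp only [zero_add] at h
  exact h

theorem pairwise_disjoint_yBlock : Pairwise (Function.onFun Disjoint (yBlock k ν)) :=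
  pairwise_disjoint_blockAt 1 _ _ ν

theorem disjoint_xBlock_yBlock (a b : Fin ν) : Disjoint (xBlock k ν a) (yBlock k ν b) :=
  disjoint_blockAt 1 ((mul_add_le_mul a _).trans (Nat.le_add_right _ _))

theorem eq_of_union_eq_union {α ι κ : Type*} [DecidableEq α] {X : ι → Finset α} {Y : κ → Finset α}
    (hX : Pairwise (Function.onFun Disjoint X)) (hne : ∀ a, (X a).Nonempty)
    (hXY : ∀ a b, Disjoint (X a) (Y b)) {a a' : ι} {b b' : κ} (h : X a ∪ Y b = X a' ∪ Y b') :
    a = a' := by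
  obtain ⟨x, hx⟩ := hne a
  have hx' : x ∈ X a' := (mem_union.1 (h ▸ mem_union_left _ hx)).resolve_right
    (disjoint_left.1 (hXY a b') hx)
  exact by_contra fun hne => disjoint_left.1 (hX hne) hx hx'

theorem injective_xBlock_union_yBlock (hk : 2 ≤ k) :
    Function.Injective fun ab : Fin ν × Fin ν => xBlock k ν ab.1 ∪ yBlock k ν ab.2 := by
  rintro ⟨a, b⟩ ⟨a', b'⟩ h
  refine Prod.ext (eq_of_union_eq_union pairwise_disjoint_xBlock
    (fun a => card_pos.1 ?_) disjoint_xBlock_yBlock h) ?_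
  · rw [card_xBlock]; omega
  · simp only [union_comm (xBlock k ν _)] at h
    refine eq_of_union_eq_union pairwise_disjoint_yBlock (fun b => card_pos.1 ?_)
      (fun b a => (disjoint_xBlock_yBlock a b).symm) h
    rw [card_yBlock]; omega

theorem card_xBlock_union_yBlock (a b : Fin ν) : #(xBlock k ν a ∪ yBlock k ν b) = k := by
  rw [card_union_of_disjoint (disjoint_xBlock_yBlock a b), card_xBlock, card_yBlock]
  omega

theorem pairOf_eq_map (π : Equiv.Perm (Fin (k * ν))) (a b : Fin ν) :
    pairOf (k * ν) k ν π a b = (xBlock k ν a ∪ yBlock k ν b).map π.toEmbedding := by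
  rw [pairOf_eq_union, map_union]

theorem injective2_pairOf (hk : 2 ≤ k) (π : Equiv.Perm (Fin (k * ν))) :
    Function.Injective2 (pairOf (k * ν) k ν π) := fun a a' b b' h => by
  rw [pairOf_eq_map, pairOf_eq_map] at h
  exact Prod.mk_inj.1
    (@injective_xBlock_union_yBlock k ν hk (a, b) (a', b') (Finset.map_injective _ h))

theorem card_pairOf (π : Equiv.Perm (Fin (k * ν))) (a b : Fin ν) :
    #(pairOf (k * ν) k ν π a b) = k := by
  rw [pairOf_eq_map, card_map, card_xBlock_union_yBlock]

theorem uniformM_real_includesPairXY (hk : 2 ≤ k) {E : Finset (Fin (k * ν))} (hE : #E = k) :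
    (uniformM (Equiv.Perm (Fin (k * ν)))).real {π | includesPairXY (k * ν) k ν π E} =
      (ν : ℝ) ^ 2 / (k * ν).choose k := by
  have h := uniformM_real_exists_map_eq (injective_xBlock_union_yBlock (ν := ν) hk)
    (fun ab => card_xBlock_union_yBlock ab.1 ab.2) hE
  simpa only [includesPairXY, pairOf_eq_map, Prod.exists, Fintype.card_prod, Fintype.card_fin,
    Nat.cast_mul, sq, eq_comm (a := E)] using h

end Blocks

/-! ### Independent trials -/

section UnionBound

variable {Ω ι : Type*} [MeasurableSpace Ω] {P : Measure Ω}

theorem measureReal_not_and_le [IsFiniteMeasure P] (p q : Ω → Prop) :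
    P.real {ω | ¬(p ω ∧ q ω)} ≤ P.real {ω | ¬p ω} + P.real {ω | ¬q ω} :=
  (measureReal_mono fun _ hω => not_and_or.1 hω).trans (measureReal_union_le _ _)

theorem measureReal_not_forall_mem_le {s : Finset ι} {p : ι → Ω → Prop} {e : ℝ}
    (h : ∀ i ∈ s, P.real {ω | ¬p i ω} ≤ e) : P.real {ω | ¬∀ i ∈ s, p i ω} ≤ #s * e := by
  have hunion : {ω | ¬∀ i ∈ s, p i ω} = ⋃ i ∈ s, {ω | ¬p i ω} := by ext; simp
  rw [hunion, ← nsmul_eq_mul]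
  exact (measureReal_biUnion_finset_le _ _).trans (sum_le_card_nsmul _ _ _ h)

end UnionBound

section ProductMeasure

theorem measureReal_pi_apply_mem {ι Ω : Type*} [Fintype ι] [MeasurableSpace Ω] (μ : Measure Ω)
    [IsProbabilityMeasure μ] {A : Set Ω} (hA : MeasurableSet A) (i : ι) :
    (Measure.pi fun _ : ι => μ).real {ω | ω i ∈ A} = μ.real A :=
  (measurePreserving_eval (fun _ : ι => μ) i).measureReal_preimage hA.nullMeasurableSet

theorem measureReal_prod_le_add {Ω₁ Ω₂ : Type*} [MeasurableSpace Ω₁] [MeasurableSpace Ω₂]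
    {P₁ : Measure Ω₁} {P₂ : Measure Ω₂} [IsProbabilityMeasure P₁] [IsProbabilityMeasure P₂]
    {S : Set (Ω₁ × Ω₂)} (hS : MeasurableSet S) {Z : Set Ω₁} {c : ℝ} (hc : 0 ≤ c)
    (h : ∀ x ∉ Z, P₂.real (Prod.mk x ⁻¹' S) ≤ c) : (P₁.prod P₂).real S ≤ P₁.real Z + c := by
  have hsection (x) : P₂ (Prod.mk x ⁻¹' S) ≤ Z.indicator 1 x + ENNReal.ofReal c := by
    by_cases hx : x ∈ Z
    · rw [Set.indicator_of_mem hx]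
      exact prob_le_one.trans le_self_add
    · rw [Set.indicator_of_notMem hx, zero_add, ENNReal.le_ofReal_iff_toReal_le (by finiteness) hc]
      exact h x hx
  have hle : (P₁.prod P₂) S ≤ P₁ Z + ENNReal.ofReal c := by
    calc (P₁.prod P₂) S = ∫⁻ x, P₂ (Prod.mk x ⁻¹' S) ∂P₁ := Measure.prod_apply hS
      _ ≤ ∫⁻ x, (Z.indicator 1 x + ENNReal.ofReal c) ∂P₁ := lintegral_mono hsection
      _ = ∫⁻ x, Z.indicator 1 x ∂P₁ + ENNReal.ofReal c := by
        rw [lintegral_add_right _ measurable_const, lintegral_const, measure_univ, mul_one]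
      _ ≤ P₁ Z + ENNReal.ofReal c := by
        gcongr
        exact lintegral_indicator_one_le Z
  rw [measureReal_def, measureReal_def, ← ENNReal.toReal_ofReal hc,
    ← ENNReal.toReal_add (by finiteness) (by finiteness)]
  exact ENNReal.toReal_mono (by finiteness) hle

end ProductMeasure

section Chernoff

variable {ι Ω : Type*} [Fintype ι]

open scoped Classical in
theorem exp_mul_card_filter_mem (A : Set Ω) (t : ℝ) (ω : ι → Ω) :
    Real.exp (t * #{i | ω i ∈ A}) = ∏ i, (1 + A.indicator (fun _ => Real.exp t - 1) (ω i)) := by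
  rw [← Finset.sum_boole, Finset.mul_sum, Real.exp_sum]
  refine Finset.prod_congr rfl fun i _ => ?_
  by_cases h : ω i ∈ A <;> simp [h]

variable [MeasurableSpace Ω] {A : Set Ω} (μ : Measure Ω) [IsProbabilityMeasure μ]

open scoped Classical in
theorem integrable_exp_mul_card_filter_mem (hA : MeasurableSet A) (t : ℝ) :
    Integrable (fun ω : ι → Ω => Real.exp (t * #{i | ω i ∈ A})) (Measure.pi fun _ => μ) := by
  simp_rw [exp_mul_card_filter_mem]
  exact Integrable.fintype_prod (f := fun _ x => 1 + A.indicator (fun _ => Real.exp t - 1) x)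
    fun _ => (integrable_const _).add ((integrable_const _).indicator hA)

open scoped Classical in
theorem mgf_card_filter_mem_le (hA : MeasurableSet A) (t : ℝ) :
    mgf (fun ω : ι → Ω => (#{i | ω i ∈ A} : ℝ)) (Measure.pi fun _ => μ) t ≤
      Real.exp (Fintype.card ι * μ.real A * (Real.exp t - 1)) := by
  have hmean : ∫ x, 1 + A.indicator (fun _ => Real.exp t - 1) x ∂μ =
      1 + μ.real A * (Real.exp t - 1) := by
    rw [integral_add (integrable_const _) ((integrable_const _).indicator hA),
      integral_indicator hA]
    simp
  have hnonneg : 0 ≤ 1 + μ.real A * (Real.exp t - 1) := by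
    nlinarith [measureReal_le_one (μ := μ) (s := A), measureReal_nonneg (μ := μ) (s := A),
      Real.exp_pos t]
  calc mgf (fun ω : ι → Ω => (#{i | ω i ∈ A} : ℝ)) (Measure.pi fun _ => μ) t
      = (1 + μ.real A * (Real.exp t - 1)) ^ Fintype.card ι := by
        simp_rw [mgf, exp_mul_card_filter_mem]
        rw [integral_fintype_prod_eq_pow fun x => 1 + A.indicator (fun _ => Real.exp t - 1) x,
          hmean]
    _ ≤ Real.exp (μ.real A * (Real.exp t - 1)) ^ Fintype.card ι := by
        gcongr
        linarith [Real.add_one_le_exp (μ.real A * (Real.exp t - 1))]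
    _ = Real.exp (Fintype.card ι * μ.real A * (Real.exp t - 1)) := by
        rw [← Real.exp_nat_mul, mul_assoc]

open scoped Classical in
theorem exp_neg_mul_mgf_card_filter_mem_le (hA : MeasurableSet A) {t : ℝ} (ht : |t| ≤ 1) :
    Real.exp (-t * ((1 + 2 * t) * (Fintype.card ι * μ.real A))) *
        mgf (fun ω : ι → Ω => (#{i | ω i ∈ A} : ℝ)) (Measure.pi fun _ => μ) t ≤
      Real.exp (-(t ^ 2 * (Fintype.card ι * μ.real A))) := by
  set m := Fintype.card ι * μ.real A
  have hm₀ : 0 ≤ m := by positivity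
  have hexp : Real.exp t - 1 ≤ t + t ^ 2 := by
    linarith [(abs_le.1 (Real.abs_exp_sub_one_sub_id_le ht)).2]
  calc _ ≤ Real.exp (-t * ((1 + 2 * t) * m)) * Real.exp (m * (Real.exp t - 1)) := by
        gcongr
        exact mgf_card_filter_mem_le μ hA t
    _ = Real.exp (-t * ((1 + 2 * t) * m) + m * (Real.exp t - 1)) := (Real.exp_add _ _).symm
    _ ≤ Real.exp (-(t ^ 2 * m)) := by
        gcongr
        linarith [mul_le_mul_of_nonneg_left hexp hm₀]

-- Markov's inequality for `exp (± t * #{i | ω i ∈ A})`.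
open scoped Classical in
theorem measureReal_not_abs_card_filter_mem_sub_le (hA : MeasurableSet A) {t : ℝ} (ht₀ : 0 ≤ t)
    (ht₁ : t ≤ 1) :
    (Measure.pi fun _ : ι => μ).real
        {ω | ¬|(#{i | ω i ∈ A} : ℝ) - Fintype.card ι * μ.real A| ≤
          2 * t * (Fintype.card ι * μ.real A)} ≤
      2 * Real.exp (-(t ^ 2 * (Fintype.card ι * μ.real A))) := by
  set m := Fintype.card ι * μ.real A
  set P := Measure.pi fun _ : ι => μ
  have hupper : P.real {ω | (1 + 2 * t) * m ≤ (#{i | ω i ∈ A} : ℝ)} ≤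
      Real.exp (-(t ^ 2 * m)) :=
    (measure_ge_le_exp_mul_mgf _ ht₀ (integrable_exp_mul_card_filter_mem μ hA _)).trans
      (exp_neg_mul_mgf_card_filter_mem_le μ hA (by rwa [abs_of_nonneg ht₀]))
  have hlower : P.real {ω | (#{i | ω i ∈ A} : ℝ) ≤ (1 + 2 * -t) * m} ≤
      Real.exp (-((-t) ^ 2 * m)) :=
    (measure_le_le_exp_mul_mgf _ (neg_nonpos.2 ht₀)
      (integrable_exp_mul_card_filter_mem μ hA _)).trans
      (exp_neg_mul_mgf_card_filter_mem_le μ hA (by rwa [abs_neg, abs_of_nonneg ht₀]))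
  calc _ ≤ P.real ({ω | (1 + 2 * t) * m ≤ (#{i | ω i ∈ A} : ℝ)} ∪
        {ω | (#{i | ω i ∈ A} : ℝ) ≤ (1 + 2 * -t) * m}) := by
        refine measureReal_mono fun ω hω => ?_
        by_contra hnot
        simp only [Set.mem_union, Set.mem_ofPred_eq, not_or, not_le] at hnot hω
        exact hω.not_ge (abs_le.2 ⟨by linarith [hnot.2], by linarith [hnot.1]⟩)
    _ ≤ Real.exp (-(t ^ 2 * m)) + Real.exp (-((-t) ^ 2 * m)) :=
        (measureReal_union_le _ _).trans (add_le_add hupper hlower)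
    _ = 2 * Real.exp (-(t ^ 2 * m)) := by rw [neg_sq, two_mul]

end Chernoff

section Hoeffding

variable {Ω β : Type*} [MeasurableSpace Ω] {P : Measure Ω} [IsProbabilityMeasure P]

theorem hasSubgaussianMGF_indicator_sub {A : Set Ω} (hA : MeasurableSet A) :
    HasSubgaussianMGF (fun ω => A.indicator (fun _ => (1 : ℝ)) ω - P.real A) (1 / 4) P := by
  have hmean : ∫ ω, A.indicator (fun _ => (1 : ℝ)) ω ∂P = P.real A := by
    rw [integral_indicator hA]
    simp
  have hmem : ∀ ω, A.indicator (fun _ => (1 : ℝ)) ω ∈ Set.Icc 0 1 := fun ω => by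
    by_cases h : ω ∈ A <;> simp [h]
  have h := hasSubgaussianMGF_of_mem_Icc
    (measurable_const.indicator hA).aemeasurable (ae_of_all P hmem)
  rw [hmean] at h
  convert h using 1
  norm_num

variable [Fintype β] {A : β → Set Ω}

open scoped Classical in
theorem hasSubgaussianMGF_card_filter_mem_sub (hA : ∀ b, MeasurableSet (A b))
    (hindep : iIndepSet A P) :
    HasSubgaussianMGF (fun ω => (#{b | ω ∈ A b} : ℝ) - ∑ b, P.real (A b))
      (Fintype.card β / 4) P := by
  have hcentred : iIndepFun (fun b ω => (A b).indicator (fun _ => (1 : ℝ)) ω - P.real (A b)) P :=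
    (hindep.iIndepFun_indicator (β := ℝ)).comp (fun b x => x - P.real (A b))
      fun _ => measurable_id.sub_const _
  convert HasSubgaussianMGF.sum_of_iIndepFun hcentred (s := univ)
    fun b _ => hasSubgaussianMGF_indicator_sub (hA b) using 2 with ω
  · simp only [Finset.sum_sub_distrib, Set.indicator_apply, Finset.sum_boole]
  · simp [div_eq_mul_inv]

open scoped Classical in
theorem measureReal_sum_add_le_card_filter_mem_le (hA : ∀ b, MeasurableSet (A b))
    (hindep : iIndepSet A P) {s : ℝ} (hs : 0 ≤ s) :
    P.real {ω | ∑ b, P.real (A b) + s ≤ (#{b | ω ∈ A b} : ℝ)} ≤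
      Real.exp (-(2 * s ^ 2 / Fintype.card β)) := by
  convert (hasSubgaussianMGF_card_filter_mem_sub hA hindep).measure_ge_le hs using 2
  · simp only [le_sub_iff_add_le']
  · push_cast
    ring_nf

open scoped Classical in
theorem measureReal_card_filter_mem_le_sum_sub_le (hA : ∀ b, MeasurableSet (A b))
    (hindep : iIndepSet A P) {s : ℝ} (hs : 0 ≤ s) :
    P.real {ω | (#{b | ω ∈ A b} : ℝ) ≤ ∑ b, P.real (A b) - s} ≤
      Real.exp (-(2 * s ^ 2 / Fintype.card β)) := by
  convert (hasSubgaussianMGF_card_filter_mem_sub hA hindep).neg.measure_ge_le hs using 2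
  · simp only [Pi.neg_apply, neg_sub, le_sub_comm]
  · push_cast
    ring_nf

end Hoeffding

section RandomBipartite

/-- The degree and codegree conditions on one side of a bipartite graph with edge relation `G`:
every `a : α` has at least `d` neighbours, and any two distinct elements of `α` have at most `c`
common ones. -/
structure RowRegular {α β : Type*} [Fintype β] (G : α → β → Prop) (d c : ℝ) : Prop where
  le_degree : open scoped Classical in ∀ a, d ≤ (#{b | G a b} : ℝ)
  codegree_le : open scoped Classical in ∀ a a', a ≠ a' → (#{b | G a b ∧ G a' b} : ℝ) ≤ c

variable {ι Ω α β : Type*} [Fintype ι] [MeasurableSpace Ω] {μ : ι → Measure Ω}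
  [∀ i, IsProbabilityMeasure (μ i)] {C : ι → Set Ω}

theorem iIndepSet_pi_of_disjoint (hC : ∀ i, MeasurableSet (C i)) {S : β → Finset ι}
    (hS : Pairwise (Function.onFun Disjoint S)) :
    iIndepSet (fun b => (S b : Set ι).pi C) (Measure.pi μ) := by
  classical
  refine (iIndepSet_iff_meas_biInter fun b =>
    MeasurableSet.pi (S b).countable_toSet fun i _ => hC i).2 fun s => ?_
  have hinter : ⋂ b ∈ s, (S b : Set ι).pi C = (s.biUnion S : Set ι).pi C := by
    ext ω
    simp only [Set.mem_iInter, Set.mem_pi, mem_coe, mem_biUnion]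
    exact ⟨fun h i ⟨b, hb, hi⟩ => h b hb i hi, fun h b hb i hi => h i ⟨b, hb, hi⟩⟩
  rw [hinter, Measure.pi_pi_finset, prod_biUnion fun b _ b' _ hne => hS hne]
  simp_rw [Measure.pi_pi_finset]

theorem measureReal_pi_finset (S : Finset ι) :
    (Measure.pi μ).real ((S : Set ι).pi C) = ∏ i ∈ S, (μ i).real (C i) := by
  simp_rw [Measure.real, Measure.pi_pi_finset, ENNReal.toReal_prod]

variable [Fintype β]

open scoped Classical in
theorem measureReal_not_le_card_filter_mem_le (hC : ∀ i, MeasurableSet (C i)) {q : β → ι}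
    (hq : Function.Injective q) {s d : ℝ} (hs : 0 ≤ s)
    (hd : d + s ≤ ∑ b, (μ (q b)).real (C (q b))) :
    (Measure.pi μ).real {ω | ¬d ≤ (#{b | ω (q b) ∈ C (q b)} : ℝ)} ≤
      Real.exp (-(2 * s ^ 2 / Fintype.card β)) := by
  have hindep := iIndepSet_pi_of_disjoint (μ := μ) hC (S := fun b => {q b})
    fun b b' hne => by simpa [Function.onFun] using hq.ne hne
  refine le_trans (measureReal_mono fun ω hω => ?_)
    (measureReal_card_filter_mem_le_sum_sub_le
      (fun b => MeasurableSet.pi (countable_toSet _) fun i _ => hC i) hindep hs)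
  simp only [Set.mem_ofPred_eq, not_le, measureReal_pi_finset, prod_singleton, Set.mem_pi,
    mem_coe, mem_singleton, forall_eq] at hω ⊢
  linarith

open scoped Classical in
theorem measureReal_not_card_filter_mem_and_mem_le (hC : ∀ i, MeasurableSet (C i))
    {q q' : β → ι} (hq : Function.Injective q) (hq' : Function.Injective q')
    (hne : ∀ b b', q b ≠ q' b') {s c : ℝ} (hs : 0 ≤ s)
    (hc : ∑ b, (μ (q b)).real (C (q b)) * (μ (q' b)).real (C (q' b)) ≤ c - s) :
    (Measure.pi μ).real {ω | ¬(#{b | ω (q b) ∈ C (q b) ∧ ω (q' b) ∈ C (q' b)} : ℝ) ≤ c} ≤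
      Real.exp (-(2 * s ^ 2 / Fintype.card β)) := by
  have hindep := iIndepSet_pi_of_disjoint (μ := μ) hC (S := fun b => {q b, q' b})
    fun b b' hb => by
      simp only [Function.onFun, disjoint_insert_left, disjoint_singleton_left, mem_insert,
        mem_singleton, hq.ne hb, hq'.ne hb, hne b b', (hne b' b).symm, or_self, not_false_eq_true,
        and_self]
  refine le_trans (measureReal_mono fun ω hω => ?_)
    (measureReal_sum_add_le_card_filter_mem_le
      (fun b => MeasurableSet.pi (countable_toSet _) fun i _ => hC i) hindep hs)
  simp only [Set.mem_ofPred_eq, not_le, measureReal_pi_finset, prod_pair (hne _ _), Set.mem_pi,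
    mem_coe, mem_insert, mem_singleton, forall_eq_or_imp, forall_eq] at hω ⊢
  linarith

theorem measureReal_not_rowRegular_le [Fintype α] (hC : ∀ i, MeasurableSet (C i))
    {Q : α → β → ι} (hQ : Function.Injective2 Q) {s d c : ℝ} (hs : 0 ≤ s)
    (hd : ∀ a, d + s ≤ ∑ b, (μ (Q a b)).real (C (Q a b)))
    (hc : ∀ a a', a ≠ a' →
      ∑ b, (μ (Q a b)).real (C (Q a b)) * (μ (Q a' b)).real (C (Q a' b)) ≤ c - s) :
    (Measure.pi μ).real {ω | ¬RowRegular (fun a b => ω (Q a b) ∈ C (Q a b)) d c} ≤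
      (Fintype.card α + Fintype.card α ^ 2) * Real.exp (-(2 * s ^ 2 / Fintype.card β)) := by
  classical
  set e := Real.exp (-(2 * s ^ 2 / Fintype.card β))
  have hdegree := measureReal_not_forall_mem_le (s := (univ : Finset α)) fun a _ =>
    measureReal_not_le_card_filter_mem_le (μ := μ) hC (hQ.right a) hs (hd a)
  have hcodegree := measureReal_not_forall_mem_le (s := (univ : Finset α).offDiag) fun aa haa =>
    measureReal_not_card_filter_mem_and_mem_le (μ := μ) hC (hQ.right aa.1) (hQ.right aa.2)
      (fun _ _ h => (mem_offDiag.1 haa).2.2 (hQ h).1) hs (hc _ _ (mem_offDiag.1 haa).2.2)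
  have hcard : (#(univ : Finset α).offDiag : ℝ) ≤ (Fintype.card α : ℝ) ^ 2 := by
    rw [offDiag_card, sq]
    exact_mod_cast Nat.sub_le _ _
  calc (Measure.pi μ).real {ω | ¬RowRegular (fun a b => ω (Q a b) ∈ C (Q a b)) d c}
      ≤ (Measure.pi μ).real {ω | ¬((∀ a ∈ univ, d ≤ (#{b | ω (Q a b) ∈ C (Q a b)} : ℝ)) ∧
          ∀ aa ∈ univ.offDiag, (#{b | ω (Q aa.1 b) ∈ C (Q aa.1 b) ∧
            ω (Q aa.2 b) ∈ C (Q aa.2 b)} : ℝ) ≤ c)} :=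
        measureReal_mono fun ω hω hgood => hω
          ⟨fun a => by convert hgood.1 a (mem_univ a),
            fun a a' ha => by convert hgood.2 (a, a') (by simpa using ha)⟩
    _ ≤ _ := measureReal_not_and_le _ _
    _ ≤ #(univ : Finset α) * e + #(univ : Finset α).offDiag * e := add_le_add hdegree hcodegree
    _ ≤ (Fintype.card α + Fintype.card α ^ 2) * e := by
        rw [card_univ, ← add_mul]
        gcongr

theorem RowRegular.measureReal_not_thinning_le [Fintype α] {Q : α → β → ι} {H : Set ι} {d c : ℝ}
    (h : RowRegular (fun a b => Q a b ∈ H) d c) (hQ : Function.Injective2 Q)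
    (hC : ∀ i, MeasurableSet (C i)) {q₁ q₂ : ℝ} (hq₁ : 0 ≤ q₁) (hq₂ : 0 ≤ q₂)
    (hq : ∀ a b, Q a b ∈ H → (μ (Q a b)).real (C (Q a b)) ∈ Set.Icc q₁ q₂) {s d' c' : ℝ}
    (hs : 0 ≤ s) (hd : d' + s ≤ q₁ * d) (hc : q₂ ^ 2 * c ≤ c' - s) :
    (Measure.pi μ).real {ω | ¬RowRegular (fun a b => Q a b ∈ H ∧ ω (Q a b) ∈ C (Q a b)) d' c'} ≤
      (Fintype.card α + Fintype.card α ^ 2) * Real.exp (-(2 * s ^ 2 / Fintype.card β)) := by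
  classical
  have hmeas (i) : MeasurableSet {x | i ∈ H ∧ x ∈ C i} := by
    by_cases hi : i ∈ H <;> simp [hi, hC i]
  have hlower (a b) : (if Q a b ∈ H then q₁ else 0) ≤
      (μ (Q a b)).real {x | Q a b ∈ H ∧ x ∈ C (Q a b)} := by
    split_ifs with hab <;> simp [hab, (hq a b _).1]
  have hupper (a b) : (μ (Q a b)).real {x | Q a b ∈ H ∧ x ∈ C (Q a b)} ≤
      if Q a b ∈ H then q₂ else 0 := by
    split_ifs with hab <;> simp [hab, (hq a b _).2]
  refine measureReal_not_rowRegular_le hmeas hQ hs (fun a => ?_) fun a a' ha => ?_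
  · calc d' + s ≤ q₁ * #{b | Q a b ∈ H} := hd.trans (by gcongr; convert h.le_degree a)
      _ = ∑ b, if Q a b ∈ H then q₁ else 0 := by
        rw [← sum_filter, sum_const, nsmul_eq_mul, mul_comm]
      _ ≤ _ := sum_le_sum fun b _ => hlower a b
  · calc _ ≤ ∑ b, (if Q a b ∈ H then q₂ else 0) * (if Q a' b ∈ H then q₂ else 0) := by
          refine sum_le_sum fun b _ => mul_le_mul (hupper a b) (hupper a' b) measureReal_nonneg ?_
          split_ifs <;> simp only [hq₂, le_refl]
      _ = q₂ ^ 2 * #{b | Q a b ∈ H ∧ Q a' b ∈ H} := by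
        simp_rw [ite_zero_mul_ite_zero]
        rw [← sum_filter, sum_const, nsmul_eq_mul, mul_comm, sq]
      _ ≤ c' - s := le_trans (by gcongr; convert h.codegree_le a a' ha) hc

end RandomBipartite

section Quasirandom

variable {α β : Type*} [Fintype α] [Fintype β] {G : α → β → Prop} {d c : ℝ}

open scoped Classical in
/-- Both parts of the bipartite graph with edge relation `G` have all degrees at least `d` and all
codegrees at most `c`. -/
def IsQuasirandomBipartite (G : α → β → Prop) (d c : ℝ) : Prop :=
  (∀ a, d ≤ (#{b | G a b} : ℝ)) ∧ (∀ b, d ≤ (#{a | G a b} : ℝ)) ∧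
    (∀ a₁ a₂, a₁ ≠ a₂ → (#{b | G a₁ b ∧ G a₂ b} : ℝ) ≤ c) ∧
    ∀ b₁ b₂, b₁ ≠ b₂ → (#{a | G a b₁ ∧ G a b₂} : ℝ) ≤ c

theorem RowRegular.isQuasirandomBipartite (h : RowRegular G d c)
    (hswap : RowRegular (fun b a => G a b) d c) : IsQuasirandomBipartite G d c :=
  ⟨h.le_degree, hswap.le_degree, h.codegree_le, hswap.codegree_le⟩

end Quasirandom

/-! ### Pseudorandom hypergraphs -/

section Pseudorandom

variable {n k s t : ℕ} {H : Finset (Finset (Fin n))} {S S' Y : Finset (Fin n)}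

theorem mem_hNbhd_iff : Y ∈ hNbhd n k H S ↔ #Y = k - #S ∧ S ∪ Y ∈ H := by
  simp only [hNbhd, mem_filter_univ]

theorem choose_sub_choose_sub_le (n s t : ℕ) :
    n.choose (t + 1) - (n - s).choose (t + 1) ≤ s * (n - 1).choose t := by
  induction s with
  | zero => simp
  | succ s ih =>
    obtain hle | hlt := le_or_gt n s
    · rw [Nat.sub_eq_zero_of_le (hle.trans s.le_succ), ← Nat.sub_eq_zero_of_le hle]
      exact ih.trans (Nat.mul_le_mul_right _ s.le_succ)
    have hpascal : (n - s).choose (t + 1) =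
        (n - (s + 1)).choose t + (n - (s + 1)).choose (t + 1) := by
      rw [← Nat.choose_succ_succ, Nat.sub_succ, Nat.succ_pred_eq_of_pos (Nat.sub_pos_of_lt hlt)]
    have hmono : (n - (s + 1)).choose t ≤ (n - 1).choose t := Nat.choose_le_choose t (by omega)
    rw [add_mul, one_mul]
    omega

theorem mul_choose_sub_choose_sub_le (n s t : ℕ) :
    n * (n.choose t - (n - s).choose t) ≤ s * t * n.choose t := by
  obtain _ | t := t
  · simp
  obtain _ | n := n
  · simp
  calc (n + 1) * ((n + 1).choose (t + 1) - (n + 1 - s).choose (t + 1))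
      ≤ (n + 1) * (s * n.choose t) := Nat.mul_le_mul_left _ (choose_sub_choose_sub_le _ s t)
    _ = s * ((n + 1).choose (t + 1) * (t + 1)) := by rw [mul_left_comm, Nat.add_one_mul_choose_eq]
    _ = s * (t + 1) * (n + 1).choose (t + 1) := by ring

theorem one_sub_mul_choose_le {n s t : ℕ} {δ : ℝ} (hn : 0 < n) (hδ : (s * t : ℝ) ≤ δ * n) :
    (1 - δ) * n.choose t ≤ ((n - s).choose t : ℝ) := by
  have hsub : n * (n.choose t - (n - s).choose t : ℝ) ≤ s * t * n.choose t := by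
    have h := mul_choose_sub_choose_sub_le n s t
    rw [← Nat.cast_le (α := ℝ)] at h
    push_cast [Nat.choose_le_choose t (Nat.sub_le n s)] at h
    exact h
  have hle : n * (n.choose t - (n - s).choose t : ℝ) ≤ n * (δ * n.choose t) := by
    calc _ ≤ (s * t * n.choose t : ℝ) := hsub
      _ ≤ δ * n * n.choose t := by gcongr
      _ = n * (δ * n.choose t) := by ring
  linarith [le_of_mul_le_mul_left hle (by positivity)]

/-- The conditions `R_a` and `R_e` (with `s = k_X`, `t = k_Y`) or `R_b` and `R_f` (with `s = k_Y`,
`t = k_X`) on the degrees and codegrees of `s`-sets in a `k`-uniform hypergraph, `k = s + t`. -/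
structure IsPseudorandom (n k s t : ℕ) (H : Finset (Finset (Fin n))) (p ε : ℝ) : Prop where
  ceil_le_degree : ∀ S : Finset (Fin n), #S = s →
    ⌈(1 - ε) * ((n - s).choose t : ℕ) * p⌉₊ ≤ hDeg n k H S
  codegree_le_floor : ∀ S₁ S₂ : Finset (Fin n), #S₁ = s → #S₂ = s → Disjoint S₁ S₂ →
    #(hNbhd n k H S₁ ∩ hNbhd n k H S₂) ≤ ⌊(1 + ε) * ((n - 2 * s).choose t : ℕ) * p ^ 2⌋₊

/-- Every `s`-set has at least `d` of the sets `T b`, relabelled by `π`, in its neighbourhood, and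
any two disjoint `s`-sets have at most `c` of them in both their neighbourhoods. -/
structure HasRegularLinks {ι : Type*} [Fintype ι] (k s : ℕ) (H : Finset (Finset (Fin n)))
    (T : ι → Finset (Fin n)) (d c : ℝ) (π : Equiv.Perm (Fin n)) : Prop where
  le_blockCount : ∀ S, #S = s → d ≤ blockCount T (hNbhd n k H S) π
  blockCount_inter_le : ∀ S S', #S = s → #S' = s → Disjoint S S' →
    blockCount T (hNbhd n k H S ∩ hNbhd n k H S') π ≤ c

theorem measureReal_not_hasRegularLinks_le {ι : Type*} [Fintype ι] {T : ι → Finset (Fin n)}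
    (hst : s + t = k) (hdisj : Pairwise (Function.onFun Disjoint T)) (hT : ∀ b, #(T b) = t)
    {d c u : ℝ} (hu : 0 ≤ u)
    (hd : ∀ S, #S = s → d + u ≤ Fintype.card ι * (#(hNbhd n k H S) / n.choose t))
    (hc : ∀ S S', #S = s → #S' = s → Disjoint S S' →
      Fintype.card ι * (#(hNbhd n k H S ∩ hNbhd n k H S') / n.choose t : ℝ) ≤ c - u) :
    (uniformM (Equiv.Perm (Fin n))).real {π | ¬HasRegularLinks k s H T d c π} ≤
      (n.choose s + n.choose s ^ 2) * Real.exp (-u ^ 2 / (32 * n)) := by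
  have hcard {S Y} (hS : #S = s) (hY : Y ∈ hNbhd n k H S) : #Y = t := by
    rw [(mem_hNbhd_iff.1 hY).1]
    omega
  set sets := powersetCard s (univ : Finset (Fin n))
  set pairs := (sets ×ˢ sets).filter fun SS => Disjoint SS.1 SS.2
  set e := Real.exp (-u ^ 2 / (32 * n))
  have hlink (S) (hS : S ∈ sets) : (uniformM (Equiv.Perm (Fin n))).real
      {π | ¬d ≤ blockCount T (hNbhd n k H S) π} ≤ e :=
    have hS := mem_powersetCard_univ.1 hS
    measureReal_not_le_blockCount_le hdisj hT (fun _ => hcard hS) hu (hd S hS)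
  have hcommon (SS) (hSS : SS ∈ pairs) : (uniformM (Equiv.Perm (Fin n))).real
      {π | ¬(blockCount T (hNbhd n k H SS.1 ∩ hNbhd n k H SS.2) π : ℝ) ≤ c} ≤ e := by
    simp only [pairs, sets, mem_filter, mem_product, mem_powersetCard_univ] at hSS
    exact measureReal_not_blockCount_le_le hdisj hT
      (fun Y hY => hcard hSS.1.1 (mem_inter.1 hY).1) hu (hc SS.1 SS.2 hSS.1.1 hSS.1.2 hSS.2)
  have hsets : #sets = n.choose s := by rw [card_powersetCard, card_univ, Fintype.card_fin]
  have hpairs : (#pairs : ℝ) ≤ n.choose s ^ 2 := by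
    rw [← hsets, sq]
    exact_mod_cast (card_filter_le _ _).trans_eq (card_product _ _)
  calc (uniformM (Equiv.Perm (Fin n))).real {π | ¬HasRegularLinks k s H T d c π}
      ≤ (uniformM (Equiv.Perm (Fin n))).real
          {π | ¬((∀ S ∈ sets, d ≤ blockCount T (hNbhd n k H S) π) ∧ ∀ SS ∈ pairs,
            (blockCount T (hNbhd n k H SS.1 ∩ hNbhd n k H SS.2) π : ℝ) ≤ c)} :=
        measureReal_mono fun π hπ hgood => hπ
          ⟨fun S hS => hgood.1 S (mem_powersetCard_univ.2 hS), fun S S' hS hS' hSS' =>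
            hgood.2 (S, S') (by simp [pairs, sets, hS, hS', hSS'])⟩
    _ ≤ _ := measureReal_not_and_le _ _
    _ ≤ #sets * e + #pairs * e := add_le_add (measureReal_not_forall_mem_le hlink)
        (measureReal_not_forall_mem_le hcommon)
    _ ≤ (n.choose s + n.choose s ^ 2) * e := by
        rw [hsets, ← add_mul]
        gcongr

namespace IsPseudorandom

variable {p ε : ℝ}

theorem le_card_hNbhd (h : IsPseudorandom n k s t H p ε) (hn : 0 < n)
    (hst : (s * t : ℝ) ≤ ε / 8 * n) (hp : 0 ≤ p) (hε : 0 ≤ ε) (hε₁ : ε ≤ 1) (hS : #S = s) :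
    (1 - 5 / 4 * ε) * n.choose t * p ≤ #(hNbhd n k H S) := by
  calc (1 - 5 / 4 * ε) * n.choose t * p ≤ (1 - ε) * ((1 - ε / 8) * n.choose t) * p := by
        rw [← mul_assoc]
        gcongr
        nlinarith
    _ ≤ (1 - ε) * (n - s).choose t * p := by
        have _ : 0 ≤ 1 - ε := sub_nonneg.2 hε₁
        gcongr
        exact one_sub_mul_choose_le hn hst
    _ ≤ #(hNbhd n k H S) := (Nat.le_ceil _).trans (mod_cast h.ceil_le_degree S hS)

theorem card_hNbhd_inter_le (h : IsPseudorandom n k s t H p ε) (hε : 0 ≤ ε) (hS : #S = s)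
    (hS' : #S' = s) (hSS' : Disjoint S S') :
    #(hNbhd n k H S ∩ hNbhd n k H S') ≤ (1 + ε) * n.choose t * p ^ 2 := by
  calc (#(hNbhd n k H S ∩ hNbhd n k H S') : ℝ)
      ≤ (1 + ε) * (n - 2 * s).choose t * p ^ 2 := (Nat.le_floor_iff (by positivity)).1
        (h.codegree_le_floor S S' hS hS' hSS')
    _ ≤ (1 + ε) * n.choose t * p ^ 2 := by
        gcongr
        exact Nat.sub_le _ _

theorem measureReal_not_hasRegularLinks_le {ν : ℕ} {T : Fin ν → Finset (Fin n)}
    (h : IsPseudorandom n k s t H p ε) (hk : s + t = k) (hn : 0 < n) (ht : t ≤ n)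
    (hst : (s * t : ℝ) ≤ ε / 8 * n) (hp : 0 ≤ p) (hp₁ : p ≤ 1) (hε : 0 ≤ ε) (hε₁ : ε ≤ 1)
    (hdisj : Pairwise (Function.onFun Disjoint T)) (hT : ∀ b, #(T b) = t) :
    (uniformM (Equiv.Perm (Fin n))).real
        {π | ¬HasRegularLinks k s H T ((1 - 3 / 2 * ε) * (ν * p))
          ((1 + 5 / 4 * ε) * (ν * p ^ 2)) π} ≤
      (n.choose s + n.choose s ^ 2) * Real.exp (-(ε / 4 * (ν * p ^ 2)) ^ 2 / (32 * n)) := by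
  have hchoose : (0 : ℝ) < n.choose t := by exact_mod_cast Nat.choose_pos ht
  refine _root_.measureReal_not_hasRegularLinks_le hk hdisj hT (by positivity)
    (fun S hS => ?_) fun S S' hS hS' hSS' => ?_
  · calc (1 - 3 / 2 * ε) * (ν * p) + ε / 4 * (ν * p ^ 2)
        ≤ (1 - 3 / 2 * ε) * (ν * p) + ε / 4 * (ν * p) := by
          gcongr
          exact pow_le_of_le_one hp hp₁ two_ne_zero
      _ = ν * ((1 - 5 / 4 * ε) * n.choose t * p / n.choose t) := by field_simp; ring
      _ ≤ ν * (#(hNbhd n k H S) / n.choose t) := by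
          gcongr
          exact h.le_card_hNbhd hn hst hp hε hε₁ hS
      _ = _ := by rw [Fintype.card_fin]
  · calc (Fintype.card (Fin ν) * (#(hNbhd n k H S ∩ hNbhd n k H S') / n.choose t) : ℝ)
        ≤ ν * ((1 + ε) * n.choose t * p ^ 2 / n.choose t) := by
          rw [Fintype.card_fin]
          gcongr
          exact h.card_hNbhd_inter_le hε hS hS' hSS'
      _ = (1 + 5 / 4 * ε) * (ν * p ^ 2) - ε / 4 * (ν * p ^ 2) := by field_simp; ring

end IsPseudorandom

end Pseudorandom

section UnlabelledGraph

variable {k ν : ℕ} {H : Finset (Finset (Fin (k * ν)))} {π : Equiv.Perm (Fin (k * ν))} {d c : ℝ}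

theorem map_yBlock_mem_hNbhd_iff (a b : Fin ν) :
    (yBlock k ν b).map π.toEmbedding ∈ hNbhd (k * ν) k H ((xBlock k ν a).map π.toEmbedding) ↔
      pairOf (k * ν) k ν π a b ∈ H := by
  rw [mem_hNbhd_iff, pairOf_eq_union]
  simp only [card_map, card_yBlock, card_xBlock, true_and]

theorem map_xBlock_mem_hNbhd_iff (a b : Fin ν) :
    (xBlock k ν a).map π.toEmbedding ∈ hNbhd (k * ν) k H ((yBlock k ν b).map π.toEmbedding) ↔
      pairOf (k * ν) k ν π a b ∈ H := by
  rw [mem_hNbhd_iff, pairOf_eq_union, union_comm]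
  simp only [card_map, card_yBlock, card_xBlock, and_iff_right_iff_imp]
  omega

theorem HasRegularLinks.rowRegular {s : ℕ} {T S : Fin ν → Finset (Fin (k * ν))}
    {G : Fin ν → Fin ν → Prop} (h : HasRegularLinks k s H T d c π) (hS : ∀ a, #(S a) = s)
    (hdisj : Pairwise (Function.onFun Disjoint S))
    (hG : ∀ a b, (T b).map π.toEmbedding ∈ hNbhd (k * ν) k H ((S a).map π.toEmbedding) ↔ G a b) :
    RowRegular G d c := by
  classical
  have hcard (a) : #((S a).map π.toEmbedding) = s := (card_map _).trans (hS a)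
  refine ⟨fun a => ?_, fun a a' hne => ?_⟩
  · convert h.le_blockCount _ (hcard a) using 3
    rw [blockCount]
    exact congrArg card (filter_congr fun b _ => (hG a b).symm)
  · convert h.blockCount_inter_le _ _ (hcard a) (hcard a')
      ((Finset.disjoint_map _).2 (hdisj hne)) using 3
    rw [blockCount]
    exact congrArg card (filter_congr fun b _ => by rw [mem_inter, hG, hG])

theorem HasRegularLinks.rowRegular_pairOf (h : HasRegularLinks k (k / 2) H (yBlock k ν) d c π) :
    RowRegular (fun a b => pairOf (k * ν) k ν π a b ∈ H) d c :=
  h.rowRegular card_xBlock pairwise_disjoint_xBlock map_yBlock_mem_hNbhd_iff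

theorem HasRegularLinks.rowRegular_swap_pairOf
    (h : HasRegularLinks k (k - k / 2) H (xBlock k ν) d c π) :
    RowRegular (fun b a => pairOf (k * ν) k ν π a b ∈ H) d c :=
  h.rowRegular card_yBlock pairwise_disjoint_yBlock fun b a => map_xBlock_mem_hNbhd_iff a b

end UnlabelledGraph

/-! ### Typical partitions and labellings -/

section Typical

variable {k ν r : ℕ} {H : Finset (Finset (Fin (k * ν)))} {πs : Fin r → Equiv.Perm (Fin (k * ν))}
  {d c lo hi : ℝ}

open scoped Classical in
/-- The indices `i` such that the `i`-th partition includes `E`; their number is `f(E)` in the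
construction. -/
noncomputable def includingIndices (πs : Fin r → Equiv.Perm (Fin (k * ν)))
    (E : Finset (Fin (k * ν))) : Finset (Fin r) :=
  {i | includesPairXY (k * ν) k ν (πs i) E}

theorem mem_includingIndices_pairOf (i : Fin r) (a b : Fin ν) :
    i ∈ includingIndices πs (pairOf (k * ν) k ν (πs i) a b) := by
  classical
  exact (mem_filter_univ _).2 ⟨a, b, rfl⟩

/-- The outcomes of the random partitions for which the random labelling is likely to succeed:
before labelling, all the bipartite graphs are regular enough in both directions, and every `k`-set
is included in between `lo` and `hi` partitions. -/
structure IsTypical (H : Finset (Finset (Fin (k * ν)))) (d c lo hi : ℝ)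
    (πs : Fin r → Equiv.Perm (Fin (k * ν))) : Prop where
  rowRegular : ∀ i, RowRegular (fun a b => pairOf (k * ν) k ν (πs i) a b ∈ H) d c
  rowRegular_swap : ∀ i, RowRegular (fun b a => pairOf (k * ν) k ν (πs i) a b ∈ H) d c
  card_includingIndices_mem : ∀ E, #E = k → (#(includingIndices πs E) : ℝ) ∈ Set.Icc lo hi

theorem measureReal_not_isTypical_le (hk : 2 ≤ k) {e t m : ℝ}
    (hX : (uniformM (Equiv.Perm (Fin (k * ν)))).real
      {π | ¬HasRegularLinks k (k / 2) H (yBlock k ν) d c π} ≤ e)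
    (hY : (uniformM (Equiv.Perm (Fin (k * ν)))).real
      {π | ¬HasRegularLinks k (k - k / 2) H (xBlock k ν) d c π} ≤ e)
    (ht₀ : 0 ≤ t) (ht₁ : t ≤ 1) (hm : m = r * ((ν : ℝ) ^ 2 / (k * ν).choose k))
    (hlo : lo ≤ (1 - 2 * t) * m) (hhi : (1 + 2 * t) * m ≤ hi) :
    (Measure.pi fun _ : Fin r => uniformM (Equiv.Perm (Fin (k * ν)))).real
        {πs | ¬IsTypical H d c lo hi πs} ≤
      r * (e + e) + (k * ν).choose k * (2 * Real.exp (-(t ^ 2 * m))) := by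
  classical
  set μ := uniformM (Equiv.Perm (Fin (k * ν)))
  set P := Measure.pi fun _ : Fin r => μ
  set sets := powersetCard k (univ : Finset (Fin (k * ν)))
  let links π := HasRegularLinks k (k / 2) H (yBlock k ν) d c π ∧
    HasRegularLinks k (k - k / 2) H (xBlock k ν) d c π
  have hlinks (i : Fin r) (_ : i ∈ univ) : P.real {πs | ¬links (πs i)} ≤ e + e := by
    refine (measureReal_pi_apply_mem μ (A := {π | ¬links π}) .of_discrete i).trans_le ?_
    exact (measureReal_not_and_le _ _).trans (add_le_add hX hY)
  have hmult (E) (hE : E ∈ sets) : P.real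
      {πs | ¬|(#(includingIndices πs E) : ℝ) - m| ≤ 2 * t * m} ≤ 2 * Real.exp (-(t ^ 2 * m)) := by
    have h := measureReal_not_abs_card_filter_mem_sub_le (ι := Fin r) μ
      (A := {π | includesPairXY (k * ν) k ν π E}) .of_discrete ht₀ ht₁
    rw [uniformM_real_includesPairXY hk (mem_powersetCard_univ.1 hE), Fintype.card_fin, ← hm] at h
    exact h
  calc P.real {πs | ¬IsTypical H d c lo hi πs}
      ≤ P.real {πs | ¬((∀ i ∈ univ, links (πs i)) ∧
          ∀ E ∈ sets, |(#(includingIndices πs E) : ℝ) - m| ≤ 2 * t * m)} :=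
        measureReal_mono fun πs hπs hgood => hπs
          { rowRegular := fun i => (hgood.1 i (mem_univ i)).1.rowRegular_pairOf
            rowRegular_swap := fun i => (hgood.1 i (mem_univ i)).2.rowRegular_swap_pairOf
            card_includingIndices_mem := fun E hE => by
              have h := abs_le.1 (hgood.2 E (mem_powersetCard_univ.2 hE))
              constructor <;> linarith }
    _ ≤ _ := measureReal_not_and_le _ _
    _ ≤ #(univ : Finset (Fin r)) * (e + e) + #sets * (2 * Real.exp (-(t ^ 2 * m))) :=
        add_le_add (measureReal_not_forall_mem_le hlinks) (measureReal_not_forall_mem_le hmult)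
    _ = _ := by rw [card_powersetCard, card_univ, card_univ, Fintype.card_fin, Fintype.card_fin]

theorem IsTypical.measureReal_not_isQuasirandomBipartite_le (h : IsTypical H d c lo hi πs)
    (hk : 2 ≤ k) (hlo : 0 < lo) (hhi : 0 ≤ hi) {s d' c' : ℝ} (hs : 0 ≤ s) (hd : d' + s ≤ d / hi)
    (hc : c / lo ^ 2 ≤ c' - s) (i : Fin r) :
    (Measure.pi fun _ : Finset (Fin (k * ν)) => uniformM (Equiv.Perm (Fin r))).real
        {ρs | ¬IsQuasirandomBipartite (edgeP (k * ν) k ν r H (πs, ρs) i) d' c'} ≤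
      2 * ((ν + ν ^ 2) * Real.exp (-(2 * s ^ 2 / ν))) := by
  set μ := uniformM (Equiv.Perm (Fin r))
  set P := Measure.pi fun _ : Finset (Fin (k * ν)) => μ
  let C E := {ρ | pickUniform ρ (includingIndices πs E) = some i}
  have hlabel (a b : Fin ν) : μ.real (C (pairOf (k * ν) k ν (πs i) a b)) ∈ Set.Icc hi⁻¹ lo⁻¹ := by
    have hmem := mem_includingIndices_pairOf (πs := πs) i a b
    have hmult := h.card_includingIndices_mem _ (card_pairOf (πs i) a b)
    have hpos : (0 : ℝ) < #(includingIndices πs (pairOf (k * ν) k ν (πs i) a b)) := by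
      exact_mod_cast card_pos.2 ⟨i, hmem⟩
    rw [uniformM_real_pickUniform_eq_some hmem]
    exact ⟨inv_anti₀ hpos hmult.2, inv_anti₀ hlo hmult.1⟩
  have hd' : d' + s ≤ hi⁻¹ * d := by rwa [inv_mul_eq_div]
  have hc' : lo⁻¹ ^ 2 * c ≤ c' - s := by rwa [inv_pow, inv_mul_eq_div]
  have hinj := injective2_pairOf (ν := ν) hk (πs i)
  have hrows := (h.rowRegular i).measureReal_not_thinning_le (μ := fun _ => μ) (C := C)
    (H := (H : Set (Finset (Fin (k * ν))))) hinj
    (fun _ => .of_discrete) (by positivity) (by positivity) (fun a b _ => hlabel a b) hs hd' hc'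
  have hcols := (h.rowRegular_swap i).measureReal_not_thinning_le (μ := fun _ => μ) (C := C)
    (H := (H : Set (Finset (Fin (k * ν)))))
    (fun _ _ _ _ hQ => (hinj hQ).symm)
    (fun _ => .of_discrete) (by positivity) (by positivity) (fun b a _ => hlabel a b) hs hd' hc'
  rw [Fintype.card_fin] at hrows hcols
  calc P.real {ρs | ¬IsQuasirandomBipartite (edgeP (k * ν) k ν r H (πs, ρs) i) d' c'}
      ≤ P.real {ρs | ¬(RowRegular (edgeP (k * ν) k ν r H (πs, ρs) i) d' c' ∧
          RowRegular (fun b a => edgeP (k * ν) k ν r H (πs, ρs) i a b) d' c')} :=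
        measureReal_mono fun ρs hρs hgood => hρs (hgood.1.isQuasirandomBipartite hgood.2)
    _ ≤ _ := measureReal_not_and_le _ _
    _ ≤ _ := add_le_add hrows hcols
    _ = _ := (two_mul _).symm

theorem constrMeasure2_real_not_forall_isQuasirandomBipartite_le (hk : 2 ≤ k) (hlo : 0 < lo)
    (hhi : 0 ≤ hi) {s d' c' : ℝ} (hs : 0 ≤ s) (hd : d' + s ≤ d / hi) (hc : c / lo ^ 2 ≤ c' - s) :
    (constrMeasure2 (k * ν) r).real
        {ω | ¬∀ i, IsQuasirandomBipartite (edgeP (k * ν) k ν r H ω i) d' c'} ≤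
      (Measure.pi fun _ : Fin r => uniformM (Equiv.Perm (Fin (k * ν)))).real
          {πs | ¬IsTypical H d c lo hi πs} +
        r * (2 * ((ν + ν ^ 2) * Real.exp (-(2 * s ^ 2 / ν)))) := by
  refine measureReal_prod_le_add .of_discrete (by positivity) fun πs hπs => ?_
  have h := measureReal_not_forall_mem_le (s := (univ : Finset (Fin r))) fun i _ =>
    (not_not.1 hπs).measureReal_not_isQuasirandomBipartite_le hk hlo hhi hs hd hc i
  simp only [mem_univ, forall_const, card_univ, Fintype.card_fin] at h
  exact h

end Typical

/-! ### Choice of parameters -/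

/-- Each elementary event in the union bound fails with probability at most
`exp (-failureExponent k j)`, i.e. `n ^ (-(3 k + 2))` with `n = k j`. -/
noncomputable def failureExponent (k j : ℕ) : ℝ := (3 * k + 2 : ℕ) * Real.log (k * j : ℕ)

/-- The quantitative form of `log² n / ε⁴ ≪ f₀² ≪ ε √n p² / log n`, where `n = k j`, which suffices
for every concentration bound in the argument. -/
structure AdmissibleParameters (k j : ℕ) (ε p f₀ : ℝ) : Prop where
  two_le : 2 ≤ k
  one_le_log : 1 ≤ Real.log (k * j : ℕ)
  ε_mem : ε ∈ Set.Ioc 0 (1 / 100)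
  p_mem : p ∈ Set.Ioc 0 1
  f₀_pos : 0 < f₀
  failureExponent_le : 512 * k ^ 2 * failureExponent k j ≤ f₀ * ε ^ 2
  sq_mul_failureExponent_le :
    f₀ ^ 2 * (512 * k ^ 2 * failureExponent k j) ≤ ε * √(k * j : ℕ) * p ^ 2

namespace AdmissibleParameters

variable {k j : ℕ} {ε p f₀ : ℝ}

theorem pos (h : AdmissibleParameters k j ε p f₀) : 0 < j := by
  by_contra hj
  have hlog := h.one_le_log
  norm_num [Nat.eq_zero_of_not_pos hj] at hlog

theorem le_mul (h : AdmissibleParameters k j ε p f₀) : k ≤ k * j :=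
  Nat.le_mul_of_pos_right k h.pos

theorem one_le_cast_mul (h : AdmissibleParameters k j ε p f₀) : (1 : ℝ) ≤ (k * j : ℕ) := by
  exact_mod_cast (one_le_two.trans h.two_le).trans h.le_mul

theorem one_le_failureExponent (h : AdmissibleParameters k j ε p f₀) :
    1 ≤ failureExponent k j :=
  one_le_mul_of_one_le_of_one_le (by exact_mod_cast Nat.le_add_left 1 (3 * k + 1)) h.one_le_log

theorem le_sq_mul_failureExponent (h : AdmissibleParameters k j ε p f₀) :
    2048 ≤ 512 * k ^ 2 * failureExponent k j := by
  have hk : (2 : ℝ) ≤ k := by exact_mod_cast h.two_le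
  nlinarith [h.one_le_failureExponent]

theorem hundred_le_mul (h : AdmissibleParameters k j ε p f₀) : 100 ≤ ε * f₀ := by
  have hle : f₀ * ε ^ 2 ≤ ε * f₀ * (1 / 100) := by
    nlinarith [mul_le_mul_of_nonneg_left h.ε_mem.2 (mul_pos h.ε_mem.1 h.f₀_pos).le]
  linarith [h.failureExponent_le, h.le_sq_mul_failureExponent]

theorem one_le_f₀ (h : AdmissibleParameters k j ε p f₀) : 1 ≤ f₀ := by
  nlinarith [h.hundred_le_mul, h.ε_mem.1, h.ε_mem.2, h.f₀_pos]

theorem p_div_f₀_mem (h : AdmissibleParameters k j ε p f₀) : p / f₀ ∈ Set.Ioc 0 1 :=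
  ⟨div_pos h.p_mem.1 h.f₀_pos, div_le_one_of_le₀ (h.p_mem.2.trans h.one_le_f₀) h.f₀_pos.le⟩

theorem failureExponent_le_mul_sq_div (h : AdmissibleParameters k j ε p f₀) :
    512 * k ^ 2 * failureExponent k j ≤ ε * √(k * j : ℕ) * (p / f₀) ^ 2 := by
  rw [div_pow, ← mul_div_assoc, le_div_iff₀' (pow_pos h.f₀_pos 2)]
  exact h.sq_mul_failureExponent_le

theorem sq_mul_failureExponent_le_mul (h : AdmissibleParameters k j ε p f₀) :
    f₀ ^ 2 * (512 * k ^ 2 * failureExponent k j) ≤ ε * (k * j : ℕ) := by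
  have hε := h.ε_mem.1.le
  calc _ ≤ ε * √(k * j : ℕ) * p ^ 2 := h.sq_mul_failureExponent_le
    _ ≤ ε * √(k * j : ℕ) := mul_le_of_le_one_right (by positivity)
        (pow_le_one₀ h.p_mem.1.le h.p_mem.2)
    _ ≤ ε * (k * j : ℕ) := by
        gcongr
        exact Real.sqrt_le_iff.2
          ⟨Nat.cast_nonneg _, le_self_pow₀ h.one_le_cast_mul two_ne_zero⟩

theorem f₀_le (h : AdmissibleParameters k j ε p f₀) : f₀ ≤ (k * j : ℕ) := by
  have hsq : f₀ ≤ f₀ ^ 2 := le_self_pow₀ h.one_le_f₀ two_ne_zero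
  nlinarith [h.sq_mul_failureExponent_le_mul, h.le_sq_mul_failureExponent, h.ε_mem.2,
    h.one_le_cast_mul]

theorem mul_le (h : AdmissibleParameters k j ε p f₀) {s t : ℕ} (hs : s ≤ k) (ht : t ≤ k) :
    (s * t : ℝ) ≤ ε / 8 * (k * j : ℕ) := by
  have hst : (s * t : ℝ) ≤ k ^ 2 := by
    rw [sq]
    exact_mod_cast Nat.mul_le_mul hs ht
  have hsq : 1 ≤ f₀ ^ 2 := one_le_pow₀ h.one_le_f₀
  have hk : (512 * k ^ 2 : ℝ) ≤ 512 * k ^ 2 * failureExponent k j :=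
    le_mul_of_one_le_right (by positivity) h.one_le_failureExponent
  nlinarith [h.sq_mul_failureExponent_le_mul, h.le_sq_mul_failureExponent]

theorem failureExponent_le_sq_div (h : AdmissibleParameters k j ε p f₀) {x : ℝ}
    (hx : 512 * k ^ 2 * failureExponent k j ≤ x) :
    failureExponent k j ≤ x ^ 2 / (512 * k ^ 2) := by
  have hone := h.le_sq_mul_failureExponent
  have hk : (2 : ℝ) ≤ k := by exact_mod_cast h.two_le
  rw [le_div_iff₀' (by positivity)]
  nlinarith

theorem failureExponent_le_of_links (h : AdmissibleParameters k j ε p f₀) :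
    failureExponent k j ≤ (ε / 4 * (j * p ^ 2)) ^ 2 / (32 * (k * j : ℕ)) := by
  have hj : (j : ℝ) ≠ 0 := by exact_mod_cast h.pos.ne'
  have hk : (k : ℝ) ≠ 0 := by exact_mod_cast (two_pos.trans_le h.two_le).ne'
  have hle : 512 * k ^ 2 * failureExponent k j ≤ ε * √(k * j : ℕ) * p ^ 2 :=
    (le_mul_of_one_le_left (by linarith [h.le_sq_mul_failureExponent])
      (one_le_pow₀ h.one_le_f₀)).trans h.sq_mul_failureExponent_le
  refine (h.failureExponent_le_sq_div hle).trans_eq ?_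
  rw [mul_pow, mul_pow, Real.sq_sqrt (Nat.cast_nonneg _)]
  push_cast
  field_simp
  ring

theorem failureExponent_le_of_multiplicities (h : AdmissibleParameters k j ε p f₀) :
    failureExponent k j ≤ (ε / 8) ^ 2 * (f₀ / 2) := by
  have hk : (2 : ℝ) ≤ k := by exact_mod_cast h.two_le
  have hle : 128 * failureExponent k j ≤ 512 * k ^ 2 * failureExponent k j :=
    mul_le_mul_of_nonneg_right (by nlinarith) (zero_le_one.trans h.one_le_failureExponent)
  linarith [h.failureExponent_le]

theorem failureExponent_le_of_labels (h : AdmissibleParameters k j ε p f₀) :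
    failureExponent k j ≤ 2 * (ε / 2 * (j * (p / f₀) ^ 2)) ^ 2 / j := by
  have hj : (j : ℝ) ≠ 0 := by exact_mod_cast h.pos.ne'
  have hk : (2 : ℝ) ≤ k := by exact_mod_cast h.two_le
  set q := p / f₀
  calc failureExponent k j ≤ (ε * √(k * j : ℕ) * q ^ 2) ^ 2 / (512 * k ^ 2) :=
        h.failureExponent_le_sq_div h.failureExponent_le_mul_sq_div
    _ ≤ (ε * √(k * j : ℕ) * q ^ 2) ^ 2 / (2 * k) := by
        exact div_le_div_of_nonneg_left (by positivity) (by positivity) (by nlinarith)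
    _ = 2 * (ε / 2 * (j * q ^ 2)) ^ 2 / j := by
        rw [mul_pow, mul_pow, Real.sq_sqrt (Nat.cast_nonneg _)]
        push_cast
        field_simp

end AdmissibleParameters

theorem floor_div_mul_mem {x q : ℝ} (hx : 0 ≤ x) (hq : 0 < q) (hq₁ : q ≤ 1) :
    ⌊x / q⌋₊ * q ∈ Set.Icc (x - 1) x := by
  have hfloor := Nat.floor_le (div_nonneg hx hq.le)
  have hfloor' := (Nat.sub_one_lt_floor (x / q)).le
  rw [le_div_iff₀ hq] at hfloor
  rw [sub_le_iff_le_add, div_le_iff₀ hq] at hfloor'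
  exact ⟨by linarith, hfloor⟩

theorem sq_div_choose_le_one {k ν : ℕ} (hk : 2 ≤ k) (hkν : k ≤ k * ν) :
    (ν : ℝ) ^ 2 / (k * ν).choose k ≤ 1 := by
  obtain ⟨E, -, hE⟩ := exists_subset_card_eq (s := (univ : Finset (Fin (k * ν))))
    (n := k) (by simpa using hkν)
  rw [← uniformM_real_includesPairXY hk hE]
  exact measureReal_le_one

theorem choose_add_choose_sq_le {n s k : ℕ} (hn : 1 ≤ n) (hs : s ≤ k) :
    (n.choose s + n.choose s ^ 2 : ℝ) ≤ 2 * n ^ (2 * k) := by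
  have hchoose : n.choose s ≤ n ^ k :=
    (Nat.choose_le_pow n s).trans (Nat.pow_le_pow_right hn hs)
  have hle : n ^ k ≤ n ^ (2 * k) := Nat.pow_le_pow_right hn (by omega)
  have hsq : n.choose s ^ 2 ≤ n ^ (2 * k) := by
    rw [mul_comm 2 k, pow_mul]
    exact Nat.pow_le_pow_left hchoose 2
  exact_mod_cast (by omega : n.choose s + n.choose s ^ 2 ≤ 2 * n ^ (2 * k))

namespace AdmissibleParameters

variable {k j r : ℕ} {ε p f₀ : ℝ} {H : Finset (Finset (Fin (k * j)))}

theorem expected_multiplicity_mem (h : AdmissibleParameters k j ε p f₀)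
    (hr : r = ⌊(1 - ε) * ((k * j).choose k : ℕ) * f₀ / (j : ℝ) ^ 2⌋₊) :
    r * ((j : ℝ) ^ 2 / (k * j).choose k) ∈ Set.Icc ((1 - ε) * f₀ - 1) ((1 - ε) * f₀) := by
  have hj : (0 : ℝ) < j := by exact_mod_cast h.pos
  have hchoose : (0 : ℝ) < (k * j).choose k := by exact_mod_cast Nat.choose_pos h.le_mul
  have hε : 0 ≤ 1 - ε := by linarith [h.ε_mem.2]
  have hr' : r = ⌊(1 - ε) * f₀ / ((j : ℝ) ^ 2 / (k * j).choose k)⌋₊ := by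
    rw [hr, div_div_eq_mul_div, mul_right_comm]
  rw [hr']
  exact floor_div_mul_mem (mul_nonneg hε h.f₀_pos.le) (by positivity)
    (sq_div_choose_le_one h.two_le h.le_mul)

theorem le_pow (h : AdmissibleParameters k j ε p f₀)
    (hr : r = ⌊(1 - ε) * ((k * j).choose k : ℕ) * f₀ / (j : ℝ) ^ 2⌋₊) :
    (r : ℝ) ≤ ((k * j : ℕ) : ℝ) ^ (k + 1) := by
  have hε : 0 ≤ 1 - ε := by linarith [h.ε_mem.2]
  have hε₁ : 1 - ε ≤ 1 := by linarith [h.ε_mem.1]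
  have hf₀ := h.f₀_pos.le
  have hchoose : ((k * j).choose k : ℝ) ≤ ((k * j : ℕ) : ℝ) ^ k := by
    exact_mod_cast Nat.choose_le_pow (k * j) k
  calc (r : ℝ) ≤ (1 - ε) * (k * j).choose k * f₀ / (j : ℝ) ^ 2 := by
        rw [hr]
        exact Nat.floor_le (by positivity)
    _ ≤ (1 - ε) * (k * j).choose k * f₀ :=
        div_le_self (by positivity) (one_le_pow₀ (by exact_mod_cast h.pos))
    _ ≤ 1 * ((k * j : ℕ) : ℝ) ^ k * (k * j : ℕ) := by
        gcongr
        exact h.f₀_le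
    _ = _ := by rw [one_mul, pow_succ]

theorem measureReal_not_hasRegularLinks_le {s t : ℕ} {T : Fin j → Finset (Fin (k * j))}
    (h : AdmissibleParameters k j ε p f₀) (hH : IsPseudorandom (k * j) k s t H p ε)
    (hk : s + t = k) (hdisj : Pairwise (Function.onFun Disjoint T)) (hT : ∀ b, #(T b) = t) :
    (uniformM (Equiv.Perm (Fin (k * j)))).real
        {π | ¬HasRegularLinks k s H T ((1 - 3 / 2 * ε) * (j * p))
          ((1 + 5 / 4 * ε) * (j * p ^ 2)) π} ≤
      2 * (k * j : ℕ) ^ (2 * k) * Real.exp (-failureExponent k j) := by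
  obtain ⟨⟨hε, hε₁⟩, hp, hp₁⟩ := And.intro h.ε_mem h.p_mem
  have hkn := h.le_mul
  have hn : 0 < k * j := Nat.mul_pos (two_pos.trans_le h.two_le) h.pos
  refine (hH.measureReal_not_hasRegularLinks_le hk hn (by omega)
    (h.mul_le (by omega) (by omega)) hp.le hp₁ hε.le (by linarith) hdisj hT).trans ?_
  gcongr ?_ * Real.exp ?_
  · exact choose_add_choose_sq_le hn (by omega)
  · rw [neg_div]
    exact neg_le_neg h.failureExponent_le_of_links

theorem measureReal_not_isTypical_le (h : AdmissibleParameters k j ε p f₀)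
    (hX : IsPseudorandom (k * j) k (k / 2) (k - k / 2) H p ε)
    (hY : IsPseudorandom (k * j) k (k - k / 2) (k / 2) H p ε)
    (hr : r = ⌊(1 - ε) * ((k * j).choose k : ℕ) * f₀ / (j : ℝ) ^ 2⌋₊) :
    (Measure.pi fun _ : Fin r => uniformM (Equiv.Perm (Fin (k * j)))).real
        {πs | ¬IsTypical H ((1 - 3 / 2 * ε) * (j * p)) ((1 + 5 / 4 * ε) * (j * p ^ 2))
          ((1 - 13 / 10 * ε) * f₀) f₀ πs} ≤
      (4 * r * (k * j : ℕ) ^ (2 * k) + 2 * (k * j : ℕ) ^ k) *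
        Real.exp (-failureExponent k j) := by
  obtain ⟨hε, hε₁⟩ := h.ε_mem
  have hf₀ := h.f₀_pos
  have hεf₀ := h.hundred_le_mul
  have hm := h.expected_multiplicity_mem hr
  set m := r * ((j : ℝ) ^ 2 / (k * j).choose k) with hm_def
  have hlo : (1 - 13 / 10 * ε) * f₀ ≤ (1 - 2 * (ε / 8)) * m := by nlinarith [hm.1]
  have hhi : (1 + 2 * (ε / 8)) * m ≤ f₀ := by nlinarith [hm.2]
  have hmult : Real.exp (-((ε / 8) ^ 2 * m)) ≤ Real.exp (-failureExponent k j) := by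
    have hm_lower : f₀ / 2 ≤ m := by nlinarith [hm.1]
    gcongr
    exact h.failureExponent_le_of_multiplicities.trans (by gcongr)
  have hchoose : ((k * j).choose k : ℝ) ≤ ((k * j : ℕ) : ℝ) ^ k := by
    exact_mod_cast Nat.choose_le_pow (k * j) k
  refine (_root_.measureReal_not_isTypical_le h.two_le
    (h.measureReal_not_hasRegularLinks_le hX (by omega) pairwise_disjoint_yBlock card_yBlock)
    (h.measureReal_not_hasRegularLinks_le hY (by omega) pairwise_disjoint_xBlock card_xBlock)
    (t := ε / 8) (by linarith) (by linarith) hm_def hlo hhi).trans ?_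
  calc _ ≤ r * (2 * (k * j : ℕ) ^ (2 * k) * Real.exp (-failureExponent k j) +
          2 * (k * j : ℕ) ^ (2 * k) * Real.exp (-failureExponent k j)) +
        (k * j : ℕ) ^ k * (2 * Real.exp (-failureExponent k j)) := by gcongr
    _ = _ := by ring

theorem degree_add_slack_le (h : AdmissibleParameters k j ε p f₀) :
    (1 - 2 * ε) * j * (p / f₀) + ε / 2 * (j * (p / f₀) ^ 2) ≤
      (1 - 3 / 2 * ε) * (j * p) / f₀ := by
  have hε := h.ε_mem.1
  obtain ⟨hq, hq₁⟩ := h.p_div_f₀_mem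
  calc _ ≤ (1 - 2 * ε) * j * (p / f₀) + ε / 2 * (j * (p / f₀)) := by
        gcongr
        exact pow_le_of_le_one hq.le hq₁ two_ne_zero
    _ = _ := by ring

theorem codegree_le_sub_slack (h : AdmissibleParameters k j ε p f₀) :
    (1 + 5 / 4 * ε) * (j * p ^ 2) / ((1 - 13 / 10 * ε) * f₀) ^ 2 ≤
      (1 + 5 * ε) * j * (p / f₀) ^ 2 - ε / 2 * (j * (p / f₀) ^ 2) := by
  obtain ⟨hε, hε₁⟩ := h.ε_mem
  have hf₀ := h.f₀_pos
  have hlo : 0 < 1 - 13 / 10 * ε := by linarith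
  have hcoeff : 1 + 5 / 4 * ε ≤ (1 + 9 / 2 * ε) * (1 - 13 / 10 * ε) ^ 2 := by
    nlinarith [mul_nonneg hε.le hε.le, mul_nonneg hε.le (mul_nonneg hε.le hε.le)]
  calc _ = (1 + 5 / 4 * ε) / (1 - 13 / 10 * ε) ^ 2 * (j * (p / f₀) ^ 2) := by field_simp
    _ ≤ (1 + 9 / 2 * ε) * (j * (p / f₀) ^ 2) := by
        gcongr
        exact (div_le_iff₀ (by positivity)).2 hcoeff
    _ = _ := by ring

theorem constrMeasure2_real_not_forall_isQuasirandomBipartite_le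
    (h : AdmissibleParameters k j ε p f₀)
    (hX : IsPseudorandom (k * j) k (k / 2) (k - k / 2) H p ε)
    (hY : IsPseudorandom (k * j) k (k - k / 2) (k / 2) H p ε)
    (hr : r = ⌊(1 - ε) * ((k * j).choose k : ℕ) * f₀ / (j : ℝ) ^ 2⌋₊) :
    (constrMeasure2 (k * j) r).real
        {ω | ¬∀ i, IsQuasirandomBipartite (edgeP (k * j) k j r H ω i)
          ((1 - 2 * ε) * j * (p / f₀)) ((1 + 5 * ε) * j * (p / f₀) ^ 2)} ≤
      (4 * r * (k * j : ℕ) ^ (2 * k) + 2 * (k * j : ℕ) ^ k + 4 * r * (k * j : ℕ) ^ 2) *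
        Real.exp (-failureExponent k j) := by
  have hε := h.ε_mem.1
  have hf₀ := h.f₀_pos
  have hj : 1 ≤ j := h.pos
  have hjn : j ≤ k * j := Nat.le_mul_of_pos_left j (two_pos.trans_le h.two_le)
  have hjj : (j + j ^ 2 : ℝ) ≤ 2 * (k * j : ℕ) ^ 2 := by
    exact_mod_cast (by nlinarith : j + j ^ 2 ≤ 2 * (k * j) ^ 2)
  have hlo : 0 < 1 - 13 / 10 * ε := by linarith [h.ε_mem.2]
  have hlabels : Real.exp (-(2 * (ε / 2 * (j * (p / f₀) ^ 2)) ^ 2 / j)) ≤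
      Real.exp (-failureExponent k j) := by
    gcongr
    exact h.failureExponent_le_of_labels
  refine (_root_.constrMeasure2_real_not_forall_isQuasirandomBipartite_le h.two_le
    (mul_pos hlo hf₀) hf₀.le (by positivity)
    h.degree_add_slack_le h.codegree_le_sub_slack).trans ?_
  calc _ ≤ (4 * r * (k * j : ℕ) ^ (2 * k) + 2 * (k * j : ℕ) ^ k) *
          Real.exp (-failureExponent k j) +
        r * (2 * (2 * (k * j : ℕ) ^ 2 * Real.exp (-failureExponent k j))) := by
        gcongr
        exact h.measureReal_not_isTypical_le hX hY hr
    _ = _ := by ring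

theorem exp_neg_failureExponent (h : AdmissibleParameters k j ε p f₀) :
    Real.exp (-failureExponent k j) = (((k * j : ℕ) : ℝ) ^ (3 * k + 2))⁻¹ := by
  rw [failureExponent, Real.exp_neg, Real.exp_nat_mul,
    Real.exp_log (zero_lt_one.trans_le h.one_le_cast_mul)]

theorem failure_count_mul_exp_le (h : AdmissibleParameters k j ε p f₀)
    (hr : r = ⌊(1 - ε) * ((k * j).choose k : ℕ) * f₀ / (j : ℝ) ^ 2⌋₊) :
    (4 * r * (k * j : ℕ) ^ (2 * k) + 2 * (k * j : ℕ) ^ k + 4 * r * (k * j : ℕ) ^ 2) *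
        Real.exp (-failureExponent k j) ≤ 10 / (k * j : ℕ) := by
  have hn := h.one_le_cast_mul
  have hk := h.two_le
  have hr_le := h.le_pow hr
  rw [h.exp_neg_failureExponent]
  set n : ℝ := ((k * j : ℕ) : ℝ)
  have hsum : 4 * r * n ^ (2 * k) + 2 * n ^ k + 4 * r * n ^ 2 ≤ 10 * n ^ (3 * k + 1) := by
    calc _ ≤ 4 * n ^ (k + 1) * n ^ (2 * k) + 2 * n ^ k + 4 * n ^ (k + 1) * n ^ 2 := by gcongr
      _ = 4 * n ^ (3 * k + 1) + 2 * n ^ k + 4 * n ^ (k + 3) := by ring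
      _ ≤ 4 * n ^ (3 * k + 1) + 2 * n ^ (3 * k + 1) + 4 * n ^ (3 * k + 1) := by
          gcongr 4 * n ^ (3 * k + 1) + 2 * ?_ + 4 * ?_
          · exact pow_le_pow_right₀ hn (by omega)
          · exact pow_le_pow_right₀ hn (by omega)
      _ = _ := by ring
  calc _ ≤ 10 * n ^ (3 * k + 1) * (n ^ (3 * k + 2))⁻¹ := by gcongr
    _ = 10 / n := by
        rw [pow_succ n (3 * k + 1)]
        field_simp

end AdmissibleParameters

/-! ### Asymptotics -/

section Failure

variable {k j r : ℕ} {ε p f₀ : ℝ} {H : Finset (Finset (Fin (k * j)))}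

theorem constrMeasure2_real_not_forall_isQuasirandomBipartite_le_div
    (h : 0 < f₀ → AdmissibleParameters k j ε p f₀) (hε : ε ≤ 1)
    (hX : IsPseudorandom (k * j) k (k / 2) (k - k / 2) H p ε)
    (hY : IsPseudorandom (k * j) k (k - k / 2) (k / 2) H p ε)
    (hr : r = ⌊(1 - ε) * ((k * j).choose k : ℕ) * f₀ / (j : ℝ) ^ 2⌋₊) :
    (constrMeasure2 (k * j) r).real
        {ω | ¬∀ i, IsQuasirandomBipartite (edgeP (k * j) k j r H ω i)
          ((1 - 2 * ε) * j * (p / f₀)) ((1 + 5 * ε) * j * (p / f₀) ^ 2)} ≤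
      10 / (k * j : ℕ) := by
  obtain hf₀ | hf₀ := lt_or_ge 0 f₀
  · exact ((h hf₀).constrMeasure2_real_not_forall_isQuasirandomBipartite_le hX hY hr).trans
      ((h hf₀).failure_count_mul_exp_le hr)
  have hr_zero : r = 0 := by
    rw [hr]
    exact Nat.floor_of_nonpos (div_nonpos_of_nonpos_of_nonneg (mul_nonpos_of_nonneg_of_nonpos
      (mul_nonneg (sub_nonneg.2 hε) (Nat.cast_nonneg _)) hf₀) (by positivity))
  subst hr_zero
  simp only [IsEmpty.forall_iff, not_true_eq_false, Set.ofPred_false, measureReal_empty]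
  positivity

end Failure

instance isProbabilityMeasure_constrMeasure2 (n r : ℕ) :
    IsProbabilityMeasure (constrMeasure2 n r) := by
  unfold constrMeasure2
  infer_instance

section Asymptotics

variable {k : ℕ} {ε p f₀ : ℕ → ℝ}

theorem tendsto_cast_const_mul_atTop (hk : 0 < k) :
    Tendsto (fun j : ℕ => ((k * j : ℕ) : ℝ)) atTop atTop :=
  tendsto_natCast_atTop_atTop.comp
    (tendsto_atTop_mono (fun j => Nat.le_mul_of_pos_left j hk) tendsto_id)

theorem eventually_admissibleParameters (hk : 2 ≤ k)
    (hε : ∀ᶠ j in atTop, ε j ∈ Set.Ioc 0 (1 / 100)) (hp : ∀ᶠ j in atTop, p j ∈ Set.Ioc 0 1)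
    (hlo : Tendsto (fun j => f₀ j ^ 2 * ε j ^ 4 / Real.log (k * j : ℕ) ^ 2) atTop atTop)
    (hhi : Tendsto (fun j => f₀ j ^ 2 * Real.log (k * j : ℕ) / (ε j * √(k * j : ℕ) * p j ^ 2))
      atTop (nhds 0)) :
    ∀ᶠ j in atTop, 0 < f₀ j → AdmissibleParameters k j (ε j) (p j) (f₀ j) := by
  set M : ℝ := 512 * k ^ 2 * (3 * k + 2 : ℕ)
  have hk_pos : 0 < k := two_pos.trans_le hk
  have hM : 0 < M := by positivity
  have hMU (j : ℕ) : 512 * k ^ 2 * failureExponent k j = M * Real.log (k * j : ℕ) :=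
    (mul_assoc _ _ _).symm
  have hlog := Real.tendsto_log_atTop.comp (tendsto_cast_const_mul_atTop hk_pos)
  filter_upwards [hlog.eventually_ge_atTop 1, hε, hp, hlo.eventually_ge_atTop (M ^ 2),
    hhi.eventually_lt_const (inv_pos.2 hM), eventually_gt_atTop 0]
    with j hlog_j hε_j hp_j hlo_j hhi_j hj hf₀
  rw [Function.comp_apply] at hlog_j
  have hlog_pos := zero_lt_one.trans_le hlog_j
  refine ⟨hk, hlog_j, hε_j, hp_j, hf₀, ?_, ?_⟩
  · rw [le_div_iff₀ (by positivity), ← mul_pow] at hlo_j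
    rw [hMU, ← sq_le_sq₀ (by positivity) (by positivity), mul_pow (f₀ j), ← pow_mul]
    exact hlo_j
  · have hn : (0 : ℝ) < (k * j : ℕ) := by exact_mod_cast Nat.mul_pos hk_pos hj
    have hden : 0 < ε j * √(k * j : ℕ) * p j ^ 2 :=
      mul_pos (mul_pos hε_j.1 (Real.sqrt_pos.2 hn)) (pow_pos hp_j.1 2)
    rw [div_lt_iff₀ hden, lt_inv_mul_iff₀ hM] at hhi_j
    rw [hMU, mul_left_comm]
    exact hhi_j.le

theorem card_div_choose_le_one {n k : ℕ} {H : Finset (Finset (Fin n))}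
    (hH : ∀ e ∈ H, #e = k) : (#H : ℝ) / (n.choose k : ℕ) ≤ 1 := by
  have hcard : #H ≤ n.choose k := by
    have h := Set.Sized.card_le (𝒜 := H) fun e he => hH e he
    rwa [Fintype.card_fin] at h
  exact div_le_one_of_le₀ (by exact_mod_cast hcard) (Nat.cast_nonneg _)

theorem eventually_mem_Ioc_and_pos {n ε p : ℕ → ℝ} {δ : ℝ} (hδ : 0 < δ) (hp : ∀ j, 0 ≤ p j)
    (hn : Tendsto n atTop atTop) (hε : Tendsto ε atTop (nhds 0))
    (h : Tendsto (fun j => ε j * √(n j) * p j ^ 2 / Real.log (n j) ^ 5) atTop atTop) :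
    ∀ᶠ j in atTop, ε j ∈ Set.Ioc 0 δ ∧ 0 < p j := by
  filter_upwards [h.eventually_gt_atTop 0, hn.eventually_ge_atTop 1, hε.eventually_le_const hδ]
    with j hj hn_j hε_j
  have hlog := pow_nonneg (Real.log_nonneg hn_j) 5
  have hnum : 0 < ε j * (√(n j) * p j ^ 2) := by
    rw [← mul_assoc]
    exact (div_pos_iff_of_pos_right (hlog.lt_of_ne' fun h₀ => by simp [h₀] at hj)).1 hj
  refine ⟨⟨pos_of_mul_pos_left hnum (by positivity), hε_j⟩, (hp j).lt_of_ne' fun h₀ => ?_⟩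
  simp [h₀] at hnum

theorem tendsto_measure_one_of_measureReal_not_le {ι : Type*} {l : Filter ι} {Ω : ι → Type*}
    [∀ j, MeasurableSpace (Ω j)] {P : ∀ j, Measure (Ω j)} [∀ j, IsProbabilityMeasure (P j)]
    {q : ∀ j, Ω j → Prop} {b : ι → ℝ} (hb : Tendsto b l (nhds 0))
    (h : ∀ᶠ j in l, (P j).real {ω | ¬q j ω} ≤ b j) :
    Tendsto (fun j => P j {ω | q j ω}) l (nhds 1) := by
  have hlim : Tendsto (fun j => 1 - ENNReal.ofReal (b j)) l (nhds 1) := by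
    simpa using ENNReal.Tendsto.sub tendsto_const_nhds (ENNReal.tendsto_ofReal hb)
      (Or.inl ENNReal.one_ne_top)
  refine tendsto_of_tendsto_of_tendsto_of_le_of_le' hlim tendsto_const_nhds ?_
    (Eventually.of_forall fun j => prob_le_one)
  filter_upwards [h] with j hj
  rw [tsub_le_iff_right, ← measure_univ (μ := P j)]
  calc P j Set.univ ≤ P j {ω | q j ω} + P j {ω | ¬q j ω} :=
        (measure_mono fun ω _ => em (q j ω)).trans (measure_union_le _ _)
    _ ≤ P j {ω | q j ω} + ENNReal.ofReal (b j) := by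
        gcongr
        rw [← ofReal_measureReal]
        exact ENNReal.ofReal_le_ofReal hj

end Asymptotics

theorem stmt_12_general (k : ℕ) (hk : 2 ≤ k) (H : ∀ j : ℕ, Finset (Finset (Fin (k * j))))
    (huniform : ∀ j, ∀ e ∈ H j, #e = k)
    (p : ℕ → ℝ) (hp : ∀ j, p j = (#(H j) : ℝ) / ((k * j).choose k : ℕ))
    (ε : ℕ → ℝ) (hεp : ∀ᶠ j in atTop, ε j ∈ Set.Ioc 0 (1 / 100) ∧ 0 < p j)
    (hX : ∀ j, IsPseudorandom (k * j) k (k / 2) (k - k / 2) (H j) (p j) (ε j))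
    (hY : ∀ j, IsPseudorandom (k * j) k (k - k / 2) (k / 2) (H j) (p j) (ε j))
    (f₀ : ℕ → ℝ)
    (hf₀lo : Tendsto (fun j => f₀ j ^ 2 * ε j ^ 4 / Real.log (k * j : ℕ) ^ 2) atTop atTop)
    (hf₀hi : Tendsto (fun j => f₀ j ^ 2 * Real.log (k * j : ℕ) /
      (ε j * √(k * j : ℕ) * p j ^ 2)) atTop (nhds 0))
    (r : ℕ → ℕ)
    (hr : ∀ j, r j = ⌊(1 - ε j) * ((k * j).choose k : ℕ) * f₀ j / (j : ℝ) ^ 2⌋₊)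
    (p₀ : ℕ → ℝ) (hp₀ : ∀ j, p₀ j = p j / f₀ j) :
    Tendsto (fun j => constrMeasure2 (k * j) (r j)
        {ω | ∀ i, IsQuasirandomBipartite (edgeP (k * j) k j (r j) (H j) ω i)
          ((1 - 2 * ε j) * j * p₀ j) ((1 + 5 * ε j) * j * p₀ j ^ 2)})
      atTop (nhds 1) := by
  have hε : ∀ᶠ j in atTop, ε j ∈ Set.Ioc 0 (1 / 100) := hεp.mono fun j hj => hj.1
  have hp_mem : ∀ᶠ j in atTop, p j ∈ Set.Ioc 0 1 :=
    hεp.mono fun j hj => ⟨hj.2, (hp j).trans_le (card_div_choose_le_one (huniform j))⟩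
  refine tendsto_measure_one_of_measureReal_not_le
    ((tendsto_cast_const_mul_atTop (two_pos.trans_le hk)).const_div_atTop 10) ?_
  filter_upwards [eventually_admissibleParameters hk hε hp_mem hf₀lo hf₀hi, hε] with j hadm hε_j
  rw [hp₀]
  exact constrMeasure2_real_not_forall_isQuasirandomBipartite_le_div hadm
    (hε_j.2.trans (by norm_num)) (hX j) (hY j) (hr j)

open scoped Classical in
/-- Lemma 10 of the paper: in the construction for a pseudo-random
`k`-uniform hypergraph `H` on `[n]` (`n = k j`, `k ≥ 2`) satisfying `R_a, …, R_f`,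
whp every bipartite graph `G_i`, `i = 1, …, r`, has minimum degree at least
`(1-2ε)ν_k p₀` and all codegrees (within either part) at most `(1+5ε)ν_k p₀²`, where
`ν_k = n/k = j`, `p₀ = p/f₀`, and `log²n/ε⁴ ≪ f₀² ≪ ε n^{1/2} p²/log n`,
`r = (1-ε)·C(n,k)·f₀/ν_k²`. -/
theorem stmt_12 (k : ℕ) (hk : 2 ≤ k)
    (H : ∀ j : ℕ, Finset (Finset (Fin (k * j))))
    (huniform : ∀ j, ∀ e ∈ H j, e.card = k)
    (p : ℕ → ℝ) (hp : ∀ j, p j = ((H j).card : ℝ) / (((k * j).choose k : ℕ) : ℝ))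
    (ε : ℕ → ℝ) (hε0 : Tendsto ε atTop (nhds 0))
    (hεlim : Tendsto
      (fun j => ε j * Real.sqrt ((k * j : ℕ) : ℝ) * (p j) ^ 2
                  / (Real.log ((k * j : ℕ) : ℝ)) ^ 5) atTop atTop)
    (hRa : ∀ j, ∀ S : Finset (Fin (k * j)), S.card = k / 2 →
      Nat.ceil ((1 - ε j) * (((k * j - k / 2).choose (k - k / 2) : ℕ) : ℝ) * p j)
        ≤ hDeg (k * j) k (H j) S)
    (hRb : ∀ j, ∀ S : Finset (Fin (k * j)), S.card = k - k / 2 →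
      Nat.ceil ((1 - ε j) * (((k * j - (k - k / 2)).choose (k / 2) : ℕ) : ℝ) * p j)
        ≤ hDeg (k * j) k (H j) S)
    (hRc : ∀ j, ∀ S : Finset (Fin (k * j)), S.card = k / 2 + 1 →
      (hDeg (k * j) k (H j) S : ℝ)
        ≤ (1 + ε j) * (((k * j - (k / 2 + 1)).choose (k - k / 2 - 1) : ℕ) : ℝ) * p j)
    (hRd : ∀ j, ∀ S : Finset (Fin (k * j)), S.card = (k - k / 2) + 1 →
      (hDeg (k * j) k (H j) S : ℝ)
        ≤ (1 + ε j) * (((k * j - (k - k / 2 + 1)).choose (k / 2 - 1) : ℕ) : ℝ) * p j)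
    (hRe : ∀ j, ∀ S₁ S₂ : Finset (Fin (k * j)),
      S₁.card = k / 2 → S₂.card = k / 2 → Disjoint S₁ S₂ →
      (hNbhd (k * j) k (H j) S₁ ∩ hNbhd (k * j) k (H j) S₂).card
        ≤ Nat.floor ((1 + ε j) * (((k * j - 2 * (k / 2)).choose (k - k / 2) : ℕ) : ℝ) * (p j) ^ 2))
    (hRf : ∀ j, ∀ S₁ S₂ : Finset (Fin (k * j)),
      S₁.card = k - k / 2 → S₂.card = k - k / 2 → Disjoint S₁ S₂ →
      (hNbhd (k * j) k (H j) S₁ ∩ hNbhd (k * j) k (H j) S₂).card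
        ≤ Nat.floor ((1 + ε j) * (((k * j - 2 * (k - k / 2)).choose (k / 2) : ℕ) : ℝ) * (p j) ^ 2))
    (f₀ : ℕ → ℝ)
    (hf₀lo : Tendsto (fun j => (f₀ j) ^ 2 * (ε j) ^ 4
      / (Real.log ((k * j : ℕ) : ℝ)) ^ 2) atTop atTop)
    (hf₀hi : Tendsto (fun j => (f₀ j) ^ 2 * Real.log ((k * j : ℕ) : ℝ)
      / (ε j * Real.sqrt ((k * j : ℕ) : ℝ) * (p j) ^ 2)) atTop (nhds 0))
    (r : ℕ → ℕ)
    (hr : ∀ j, r j = Nat.floor ((1 - ε j) * (((k * j).choose k : ℕ) : ℝ) * f₀ j / (j : ℝ) ^ 2))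
    (p₀ : ℕ → ℝ) (hp₀ : ∀ j, p₀ j = p j / f₀ j) :
    Tendsto (fun j : ℕ =>
        constrMeasure2 (k * j) (r j)
          {ω | ∀ i : Fin (r j),
            (∀ a : Fin j, (1 - 2 * ε j) * (j : ℝ) * p₀ j ≤
              ((Finset.univ.filter fun b : Fin j =>
                edgeP (k * j) k j (r j) (H j) ω i a b).card : ℝ)) ∧
            (∀ b : Fin j, (1 - 2 * ε j) * (j : ℝ) * p₀ j ≤
              ((Finset.univ.filter fun a : Fin j =>
                edgeP (k * j) k j (r j) (H j) ω i a b).card : ℝ)) ∧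
            (∀ a₁ a₂ : Fin j, a₁ ≠ a₂ →
              ((Finset.univ.filter fun b : Fin j =>
                  edgeP (k * j) k j (r j) (H j) ω i a₁ b ∧
                  edgeP (k * j) k j (r j) (H j) ω i a₂ b).card : ℝ)
                ≤ (1 + 5 * ε j) * (j : ℝ) * (p₀ j) ^ 2) ∧
            (∀ b₁ b₂ : Fin j, b₁ ≠ b₂ →
              ((Finset.univ.filter fun a : Fin j =>
                  edgeP (k * j) k j (r j) (H j) ω i a b₁ ∧
                  edgeP (k * j) k j (r j) (H j) ω i a b₂).card : ℝ)
                ≤ (1 + 5 * ε j) * (j : ℝ) * (p₀ j) ^ 2)})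
      atTop (nhds (1 : ℝ≥0∞)) := by
  exact stmt_12_general k hk H huniform p hp ε
    (eventually_mem_Ioc_and_pos (by norm_num) (fun j => by rw [hp]; positivity)
      (tendsto_cast_const_mul_atTop (two_pos.trans_le hk)) hε0 hεlim)
    (fun j => ⟨hRa j, hRe j⟩) (fun j => ⟨hRb j, hRf j⟩) f₀ hf₀lo hf₀hi r hr p₀ hp₀
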